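/- Let H > 0, let Ω ⊆ ℝ² be an open connected set, and let (u_n) be a sequence of solutions of (CMC) on Ω. Then the convergence domain B(u_n) = {Q ∈ Ω : the sequence (W_{u_n}(Q))_{n∈ℕ} is bounded} is an open subset of ℝ². -/

import Mathlib

/-!
Openness follows from an interior gradient estimate (`local_gradient_estimate`): a bound `W ≤ M` at
`Q` for a solution on a fixed ball around `Q` gives `W ≤ C` on a smaller ball, where `C` and the
smaller radius depend only on `M`, `H` and the first radius. The same constants serve all `uₙ`.

Write `Y = ∇u / W`, so that the equation reads `div Y = 2H` and the derivative of `Y` is the shape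
operator of the graph. Testing the equation gives a bound `O(r²)` for the area of the graph in
balls of space (`area_bound`). The Gauss curvature form is exact with bounded primitives, so
the integral of the squared second fundamental form over such a ball is bounded as well
(`energy_bound`). A pigeonhole over dyadic annuli and the length-area method then produce a radius,
bounded from below, such that the images under `Y₁` and `Y₂` of the level curve of the distance from
the base point have measure as small as desired (`exists_good_level`).

The component of `Q` of the corresponding sublevel set, with its holes filled, is a planar domain
`D` with connected boundary inside that level curve (`exists_filled_component`). On a connected
set small measure of the image means small oscillation, so the normal is almost constant along the
boundary of `D`. The derivatives of `u` in fixed directions obey the maximum principle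
(`grad_max_principle`). If the normal were almost horizontal along the whole boundary, the derivative
in one fixed direction would be large there, hence large at `Q`, against `W ≤ M`. So the
gradient is bounded on the boundary, hence on `D`; and a gradient bound on `D` forces `D` to contain
a ball of controlled radius, because its boundary is far from the base point in space.

All integrations by parts need only `C¹` fields (`integral_jacobian_eq_zero`), so no regularity
beyond `C²` is used. A cutoff away from `Q` reduces to functions on the whole plane.
-/

open Real MeasureTheory Filter Set

noncomputable section

/-- Euclidean norm on `ℝ × ℝ`. -/
def enorm2 (p : ℝ × ℝ) : ℝ := Real.sqrt (p.1 ^ 2 + p.2 ^ 2)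

/-- Partial derivative in the `x` direction. -/
def pdx (u : ℝ × ℝ → ℝ) (p : ℝ × ℝ) : ℝ := fderiv ℝ u p (1, 0)

/-- Partial derivative in the `y` direction. -/
def pdy (u : ℝ × ℝ → ℝ) (p : ℝ × ℝ) : ℝ := fderiv ℝ u p (0, 1)

/-- The area element `W_u = √(1 + |∇u|²)`. -/
def Wgraph (u : ℝ × ℝ → ℝ) (p : ℝ × ℝ) : ℝ :=
  Real.sqrt (1 + (pdx u p) ^ 2 + (pdy u p) ^ 2)

/-- Upward unit normal of the graph of `u`. -/
def normalVec (u : ℝ × ℝ → ℝ) (p : ℝ × ℝ) : ℝ × ℝ × ℝ :=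
  (-pdx u p / Wgraph u p, -pdy u p / Wgraph u p, 1 / Wgraph u p)

/-- `u` is a (C²) solution of the constant mean curvature `H` equation on `Ω`. -/
def IsCMCSolution (H : ℝ) (Ω : Set (ℝ × ℝ)) (u : ℝ × ℝ → ℝ) : Prop :=
  ContDiffOn ℝ 2 u Ω ∧ ∀ p ∈ Ω,
    (1 + (pdy u p) ^ 2) * pdx (fun q => pdx u q) p
      - 2 * (pdx u p) * (pdy u p) * pdy (fun q => pdx u q) p
      + (1 + (pdx u p) ^ 2) * pdy (fun q => pdy u q) p
    = 2 * H * (1 + (pdx u p) ^ 2 + (pdy u p) ^ 2) ^ ((3 : ℝ) / 2)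

/-- `C` is a divergence line of the sequence `u` on `Ω`. -/
def IsDivergenceLine (H : ℝ) (Ω : Set (ℝ × ℝ)) (u : ℕ → ℝ × ℝ → ℝ)
    (C : Set (ℝ × ℝ)) : Prop :=
  ∃ z₁ : ℝ × ℝ, C ⊆ Ω ∧ (∀ q ∈ C, enorm2 (q - z₁) = 1 / (2 * H)) ∧
    IsConnected C ∧ C.Nontrivial ∧
    ∃ φ : ℕ → ℕ, StrictMono φ ∧ ∀ Q ∈ C,
      Tendsto (fun n => normalVec (u (φ n)) Q) atTop
        (nhds (2 * H * (z₁.1 - Q.1), 2 * H * (z₁.2 - Q.2), 0))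

/-! ### Planar domains with connected boundary -/

/-- The boundary of an open connected planar set with connected complement is connected. A
separation of the boundary would give a map of the plane to a circle which has no continuous lift
to the line, although the plane is simply connected. -/
lemma isPreconnected_frontier_of_compl {D : Set (ℝ × ℝ)} (hDo : IsOpen D)
    (hD : IsPreconnected D) (hDc : IsPreconnected Dᶜ) : IsPreconnected (frontier D) := by
  have hcl : IsClosed (frontier D) := isClosed_frontier
  have hfrD : frontier D ⊆ Dᶜ := fun x hx hxD => by
    rw [hDo.frontier_eq] at hx; exact hx.2 hxD
  have hfrD' : frontier D ⊆ closure D := frontier_subset_closure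
  rw [isPreconnected_closed_iff]
  intro K₁ K₂ hK₁ hK₂ hcov ⟨x₁, hx₁, hx₁'⟩ ⟨x₂, hx₂, hx₂'⟩
  by_contra hne
  have hdisj : Disjoint (frontier D ∩ K₁) (frontier D ∩ K₂) := by
    rw [Set.disjoint_left]
    rintro x ⟨h1, h2⟩ ⟨_, h3⟩
    exact hne ⟨x, h1, h2, h3⟩
  obtain ⟨φ, hφ0, hφ1, -⟩ := exists_continuous_zero_one_of_isClosed
    (hcl.inter hK₁) (hcl.inter hK₂) hdisj
  have hfr : ∀ x ∈ frontier D, φ x = 0 ∨ φ x = 1 := fun x hx => by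
    rcases hcov hx with h | h
    · exact Or.inl (hφ0 ⟨hx, h⟩)
    · exact Or.inr (hφ1 ⟨hx, h⟩)
  classical
  let f : ℝ × ℝ → AddCircle (2 : ℝ) := fun x => if x ∈ D then ((φ x : ℝ) : AddCircle (2:ℝ))
    else ((-(φ x) : ℝ) : AddCircle (2:ℝ))
  -- `1` and `-1` agree modulo `2`, so the two branches match on the frontier.
  have hfc : Continuous f := by
    refine Continuous.if (p := fun x => x ∈ D) ?_ ?_ ?_
    · intro x hx
      have hx' : x ∈ frontier D := hx
      rcases hfr x hx' with h | h
      · simp [h]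
      · rw [h]
        have : ((1 : ℝ) : AddCircle (2:ℝ)) = ((-1 + 2 : ℝ) : AddCircle (2:ℝ)) := by norm_num
        rw [this, AddCircle.coe_add_period]
    · exact (AddCircle.continuous_mk' 2).comp φ.continuous
    · exact (AddCircle.continuous_mk' 2).comp φ.continuous.neg
  obtain ⟨ψ, ⟨-, hψ⟩, -⟩ := (AddCircle.isCoveringMap_coe (2:ℝ)).existsUnique_continuousMap_lifts
    ⟨f, hfc⟩ (x₁ : ℝ × ℝ) (-(φ x₁)) (by simp only [f, ContinuousMap.coe_mk]; rw [if_neg (hfrD hx₁)])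
  have hψ' : ∀ x, ((ψ x : ℝ) : AddCircle (2:ℝ)) = f x := fun x => congrFun hψ x
  -- A continuous function with values in `2ℤ` is constant on connected sets.
  have key : ∀ (S : Set (ℝ × ℝ)) (g : ℝ × ℝ → ℝ), IsPreconnected S → Continuous g →
      (∀ x ∈ S, ∃ n : ℤ, g x = 2 * n) → ∀ x ∈ S, ∀ y ∈ S, g x = g y := by
    intro S g hS hg hInt x hx y hy
    let h : ℝ × ℝ → ℤ := fun z => round (g z / 2)
    have hgh : ∀ z ∈ S, g z = 2 * (h z : ℝ) := fun z hz => by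
      obtain ⟨n, hn⟩ := hInt z hz
      have : h z = n := by simp [h, hn]
      rw [this, hn]
    have hpre := hS.image g hg.continuousOn
    by_contra hxy
    have hoc := hpre.ordConnected
    rcases lt_or_gt_of_ne hxy with hlt | hlt
    · have h1 : g x + 1 ≤ g y := by
        rw [hgh x hx, hgh y hy] at hlt ⊢
        have : h x < h y := by exact_mod_cast (by linarith : (h x : ℝ) < h y)
        have : ((h x : ℝ)) + 1 ≤ h y := by exact_mod_cast this
        linarith
      obtain ⟨z, hz, hzz⟩ := hoc.out (mem_image_of_mem g hx) (mem_image_of_mem g hy)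
        (⟨by linarith, h1⟩ : g x + 1 ∈ Icc (g x) (g y))
      rw [hgh z hz, hgh x hx] at hzz
      have : 2 * h z = 2 * h x + 1 := by exact_mod_cast hzz
      omega
    · have h1 : g y + 1 ≤ g x := by
        rw [hgh x hx, hgh y hy] at hlt
        rw [hgh x hx, hgh y hy]
        have : h y < h x := by exact_mod_cast (by linarith : (h y : ℝ) < h x)
        have : ((h y : ℝ)) + 1 ≤ h x := by exact_mod_cast this
        linarith
      obtain ⟨z, hz, hzz⟩ := hoc.out (mem_image_of_mem g hy) (mem_image_of_mem g hx)
        (⟨by linarith, h1⟩ : g y + 1 ∈ Icc (g y) (g x))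
      rw [hgh z hz, hgh y hy] at hzz
      have : 2 * h z = 2 * h y + 1 := by exact_mod_cast hzz
      omega
  have hInt : ∀ a b : ℝ, (a : AddCircle (2:ℝ)) = b → ∃ n : ℤ, a - b = 2 * n := by
    intro a b hab
    rw [← sub_eq_zero, ← AddCircle.coe_sub, AddCircle.coe_eq_zero_iff] at hab
    obtain ⟨n, hn⟩ := hab
    exact ⟨n, by rw [← hn]; simp [mul_comm]⟩
  have hA' : ∀ x ∈ closure D, ∀ y ∈ closure D, ψ x - φ x = ψ y - φ y := by
    refine key (closure D) (fun x => ψ x - φ x) hD.closure (by fun_prop) ?_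
    intro x hx
    by_cases hxD : x ∈ D
    · apply hInt
      rw [hψ']; simp [f, hxD]
    · have hxf : x ∈ frontier D := by rw [hDo.frontier_eq]; exact ⟨hx, hxD⟩
      obtain ⟨n, hn⟩ := hInt (ψ x) (-(φ x)) (by rw [hψ']; simp [f, hxD])
      rcases hfr x hxf with h | h
      · exact ⟨n, by rw [← hn, h]; ring⟩
      · exact ⟨n - 1, by push_cast; rw [h] at hn ⊢; linarith⟩
  have hB : ∀ x ∈ Dᶜ, ∀ y ∈ Dᶜ, ψ x - -(φ x) = ψ y - -(φ y) := by
    refine key Dᶜ (fun x => ψ x - -(φ x)) hDc (by fun_prop) ?_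
    intro x hx
    apply hInt
    rw [hψ']; simp only [f]; rw [if_neg hx]
  have e1 := hA' x₁ (hfrD' hx₁) x₂ (hfrD' hx₂)
  have e2 := hB x₁ (hfrD hx₁) x₂ (hfrD hx₂)
  have e3 : φ x₁ = 0 := hφ0 ⟨hx₁, hx₁'⟩
  have e4 : φ x₂ = 1 := hφ1 ⟨hx₂, hx₂'⟩
  rw [e3, e4] at e1 e2
  linarith

/-- The exterior of a ball of the plane is connected. -/
lemma isPreconnected_compl_ball (Q : ℝ × ℝ) (R : ℝ) :
    IsPreconnected (Metric.ball Q R)ᶜ := by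
  rcases lt_or_ge 0 R with hR | hR
  · have h1 : IsPreconnected (Metric.sphere (0 : ℝ × ℝ) 1) := by
      apply isPreconnected_sphere
      rw [rank_prod', Module.rank_self]; norm_num
    have h2 : IsPreconnected ((fun z : ℝ × (ℝ × ℝ) => Q + z.1 • z.2) ''
        (Ici R ×ˢ Metric.sphere (0 : ℝ × ℝ) 1)) :=
      ((isPreconnected_Ici).prod h1).image _ (by fun_prop)
    convert h2 using 1
    ext x
    simp only [mem_compl_iff, Metric.mem_ball, not_lt, mem_image, mem_prod, mem_Ici,
      mem_sphere_iff_norm, sub_zero, Prod.exists]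
    constructor
    · intro hx
      rw [dist_eq_norm] at hx
      have hpos : 0 < ‖x - Q‖ := lt_of_lt_of_le hR hx
      refine ⟨‖x - Q‖, (‖x - Q‖⁻¹ • (x - Q)).1, (‖x - Q‖⁻¹ • (x - Q)).2, ⟨hx, ?_⟩, ?_⟩
      · rw [Prod.mk.eta, norm_smul, norm_inv, norm_norm, inv_mul_cancel₀ hpos.ne']
      · rw [Prod.mk.eta, smul_smul, mul_inv_cancel₀ hpos.ne', one_smul]; abel
    · rintro ⟨t, a, b, ⟨ht, hab⟩, rfl⟩
      rw [dist_eq_norm, add_sub_cancel_left, norm_smul, hab, mul_one, Real.norm_eq_abs]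
      exact ht.trans (le_abs_self t)
  · rw [Metric.ball_eq_empty.2 hR, compl_empty]; exact isPreconnected_univ

/-- Inside a bounded open set `O ∋ Q` of the plane: the component of `Q`, with its holes filled.
It is open, its frontier is connected and contained in the frontier of `O`. -/
lemma exists_filled_component {O : Set (ℝ × ℝ)} (hO : IsOpen O) {Q : ℝ × ℝ} (hQ : Q ∈ O) {R : ℝ}
    (hb : O ⊆ Metric.ball Q R) :
    ∃ D : Set (ℝ × ℝ), IsOpen D ∧ Q ∈ D ∧ D ⊆ Metric.ball Q R ∧ IsPreconnected (frontier D) ∧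
      frontier D ⊆ closure O \ O := by
  set C := connectedComponentIn O Q with hC
  have hCo : IsOpen C := hO.connectedComponentIn
  have hCO : C ⊆ O := connectedComponentIn_subset _ _
  have hCc : IsPreconnected C := isPreconnected_connectedComponentIn
  have hQC : Q ∈ C := mem_connectedComponentIn hQ
  have hfrC : frontier C ⊆ closure O \ O := by
    intro x hx
    refine ⟨closure_mono hCO (frontier_subset_closure hx), fun hxO => ?_⟩
    have h1 : connectedComponentIn O x ∈ nhds x :=
      hO.connectedComponentIn.mem_nhds (mem_connectedComponentIn hxO)
    obtain ⟨y, hy1, hy2⟩ := mem_closure_iff_nhds.1 (frontier_subset_closure hx) _ h1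
    have e1 := connectedComponentIn_eq hy1
    have e2 := connectedComponentIn_eq hy2
    rw [hCo.frontier_eq] at hx
    apply hx.2
    rw [hC, e2, ← e1]
    exact mem_connectedComponentIn hxO
  have hR : 0 < R := by
    have := hb hQ
    simpa using this
  -- `E` is the component of the complement of `C` containing the exterior of the ball.
  set z : ℝ × ℝ := Q + (R, 0) with hz
  have hzb : z ∈ (Metric.ball Q R)ᶜ := by
    simp [hz, dist_eq_norm, Prod.norm_def, le_abs_self]
  have hbC : (Metric.ball Q R)ᶜ ⊆ Cᶜ := compl_subset_compl.2 (hCO.trans hb)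
  set E := connectedComponentIn Cᶜ z with hE
  have hEC : E ⊆ Cᶜ := connectedComponentIn_subset _ _
  have hzE : z ∈ E := mem_connectedComponentIn (hbC hzb)
  have hbE : (Metric.ball Q R)ᶜ ⊆ E :=
    (isPreconnected_compl_ball Q R).subset_connectedComponentIn hzb hbC
  have hEc : IsPreconnected E := isPreconnected_connectedComponentIn
  have hEmax : ∀ S : Set (ℝ × ℝ), IsPreconnected S → S ⊆ Cᶜ → (S ∩ E).Nonempty → S ⊆ E := by
    rintro S hS hSC ⟨x, hxS, hxE⟩
    rw [hE, connectedComponentIn_eq hxE]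
    exact hS.subset_connectedComponentIn hxS hSC
  have hEcl : IsClosed E := by
    have h1 : closure E ⊆ Cᶜ := closure_minimal hEC hCo.isClosed_compl
    have h2 := hEmax (closure E) hEc.closure h1 ⟨z, subset_closure hzE, hzE⟩
    exact isClosed_of_closure_subset h2
  refine ⟨Eᶜ, hEcl.isOpen_compl, fun h => hEC h hQC, ?_, ?_, ?_⟩
  · rw [compl_subset_comm]; exact hbE
  · refine isPreconnected_frontier_of_compl hEcl.isOpen_compl ?_ (by rwa [compl_compl])
    -- A piece of `Eᶜ` missing `C` could be adjoined to `E` without losing connectedness.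
    have hCE : C ⊆ Eᶜ := fun x hx hxE => hEC hxE hx
    have claim : ∀ U V : Set (ℝ × ℝ), IsOpen U → IsOpen V → Eᶜ ⊆ U ∪ V → Eᶜ ∩ (U ∩ V) = ∅ →
        C ⊆ U → Eᶜ ∩ V = ∅ := by
      intro U V hU hV hUV hd hCU
      set V' := Eᶜ ∩ V with hV'
      have hV'o : IsOpen V' := hEcl.isOpen_compl.inter hV
      have hV'C : V' ⊆ Cᶜ := fun x hx hxC => by
        have : x ∈ Eᶜ ∩ (U ∩ V) := ⟨hx.1, hCU hxC, hx.2⟩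
        rw [hd] at this; exact this
      have hEV : IsClosed (E ∪ V') := by
        have : E ∪ V' = (Eᶜ ∩ U)ᶜ := by
          ext x
          by_cases hxE : x ∈ E
          · simp [hxE]
          · have h1 := hUV hxE
            have h2 : ¬ (x ∈ U ∧ x ∈ V) := fun h => by
              have : x ∈ Eᶜ ∩ (U ∩ V) := ⟨hxE, h⟩
              rw [hd] at this; exact this
            simp only [hV', mem_union, mem_inter_iff, mem_compl_iff, hxE, not_false_eq_true,
              true_and, false_or] at h1 h2 ⊢
            tauto
        rw [this]
        exact (hEcl.isOpen_compl.inter hU).isClosed_compl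
      have hconn : IsPreconnected (E ∪ V') := by
        rw [isPreconnected_closed_iff]
        -- whichever closed piece misses `E` is clopen in the plane
        have aux : ∀ K₁ K₂ : Set (ℝ × ℝ), IsClosed K₁ → IsClosed K₂ → E ∪ V' ⊆ K₁ ∪ K₂ →
            ((E ∪ V') ∩ K₂).Nonempty → (E ∪ V') ∩ (K₁ ∩ K₂) = ∅ → E ⊆ K₁ → False := by
          intro K₁ K₂ hK₁ hK₂ hcov hne hemp hEK
          set P := (E ∪ V') ∩ K₂ with hP
          have hPc : IsClosed P := hEV.inter hK₂
          have hPo : IsOpen P := by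
            have : P = V' ∩ K₁ᶜ := by
              ext x
              constructor
              · rintro ⟨hx, hx2⟩
                have hx1 : x ∉ K₁ := fun h => by
                  have : x ∈ (E ∪ V') ∩ (K₁ ∩ K₂) := ⟨hx, h, hx2⟩
                  rw [hemp] at this; exact this
                exact ⟨hx.resolve_left fun h => hx1 (hEK h), hx1⟩
              · rintro ⟨hx, hx1⟩
                exact ⟨Or.inr hx, (hcov (Or.inr hx)).resolve_left hx1⟩
            rw [this]; exact hV'o.inter hK₁.isOpen_compl
          have huniv := IsClopen.eq_univ ⟨hPc, hPo⟩ hne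
          have hQP : Q ∈ P := huniv ▸ mem_univ Q
          rcases hQP.1 with h | h
          · exact hEC h hQC
          · exact hV'C h hQC
        intro K₁ K₂ hK₁ hK₂ hcov hne1 hne2
        by_contra hemp
        rw [not_nonempty_iff_eq_empty] at hemp
        by_cases h1 : (E ∩ K₁).Nonempty
        · have h2 : ¬ (E ∩ K₂).Nonempty := fun h2 => by
            obtain ⟨x, hx, hx'⟩ := isPreconnected_closed_iff.1 hEc K₁ K₂ hK₁ hK₂
              (subset_union_left.trans hcov) h1 h2
            have : x ∈ (E ∪ V') ∩ (K₁ ∩ K₂) := ⟨Or.inl hx, hx'⟩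
            rw [hemp] at this; exact this
          refine aux K₁ K₂ hK₁ hK₂ hcov hne2 hemp fun x hx => ?_
          exact (hcov (Or.inl hx)).resolve_right fun h => h2 ⟨x, hx, h⟩
        · refine aux K₂ K₁ hK₂ hK₁ (by rwa [union_comm K₂]) hne1 (by rwa [inter_comm K₂]) fun x hx => ?_
          exact (hcov (Or.inl hx)).resolve_left fun h => h1 ⟨x, hx, h⟩
      have := hEmax _ hconn (union_subset hEC hV'C) ⟨z, Or.inl hzE, hzE⟩
      rw [eq_empty_iff_forall_notMem]
      intro x hx
      exact hx.1 (this (Or.inr hx))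
    intro U V hU hV hUV hne1 hne2
    by_contra hemp
    rw [not_nonempty_iff_eq_empty] at hemp
    have hCUV : C ⊆ U ∨ C ⊆ V := by
      by_contra hcon
      push Not at hcon
      obtain ⟨⟨a, ha, haU⟩, ⟨b, hb', hbV⟩⟩ := hcon.imp not_subset.1 not_subset.1
      obtain ⟨x, hx, hx'⟩ := hCc U V hU hV (hCE.trans hUV)
        ⟨b, hb', (hUV (hCE hb')).resolve_right hbV⟩ ⟨a, ha, (hUV (hCE ha)).resolve_left haU⟩
      have : x ∈ Eᶜ ∩ (U ∩ V) := ⟨hCE hx, hx'⟩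
      rw [hemp] at this; exact this
    rcases hCUV with h | h
    · exact hne2.ne_empty (claim U V hU hV hUV hemp h)
    · exact hne1.ne_empty (claim V U hV hU (by rwa [union_comm]) (by rwa [inter_comm V]) h)
  · intro x hx
    rw [frontier_compl] at hx
    apply hfrC
    have hxE : x ∈ E := hEcl.frontier_subset hx
    rw [hCo.frontier_eq]
    refine ⟨?_, hEC hxE⟩
    by_contra hxC
    obtain ⟨ε, hε, hball⟩ := Metric.isOpen_iff.1 isClosed_closure.isOpen_compl x hxC
    have h1 := hEmax (Metric.ball x ε) (convex_ball x ε).isPreconnected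
      (hball.trans (compl_subset_compl.2 subset_closure)) ⟨x, Metric.mem_ball_self hε, hxE⟩
    rw [frontier, Set.mem_sdiff] at hx
    exact hx.2 (mem_interior.2 ⟨_, h1, Metric.isOpen_ball, Metric.mem_ball_self hε⟩)

/-! ### Integration by parts for `C¹` functions -/

section parts

variable {f g : ℝ × ℝ → ℝ} {x : ℝ × ℝ}

lemma continuous_pdx (hf : ContDiff ℝ 1 f) : Continuous (pdx f) :=
  (hf.continuous_fderiv one_ne_zero).clm_apply continuous_const

lemma continuous_pdy (hf : ContDiff ℝ 1 f) : Continuous (pdy f) :=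
  (hf.continuous_fderiv one_ne_zero).clm_apply continuous_const

lemma hasCompactSupport_pdx (hf : HasCompactSupport f) : HasCompactSupport (pdx f) :=
  hf.fderiv_apply (𝕜 := ℝ) (1, 0)

lemma hasCompactSupport_pdy (hf : HasCompactSupport f) : HasCompactSupport (pdy f) :=
  hf.fderiv_apply (𝕜 := ℝ) (0, 1)

lemma pdx_mul (hf : ContDiff ℝ 1 f) (hg : ContDiff ℝ 1 g) (x : ℝ × ℝ) :
    pdx (fun z => f z * g z) x = pdx f x * g x + f x * pdx g x := by
  have h1 := (hf.differentiable one_ne_zero) x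
  have h2 := (hg.differentiable one_ne_zero) x
  simp only [pdx]
  rw [fderiv_fun_mul h1 h2]
  simp; ring

lemma pdy_mul (hf : ContDiff ℝ 1 f) (hg : ContDiff ℝ 1 g) (x : ℝ × ℝ) :
    pdy (fun z => f z * g z) x = pdy f x * g x + f x * pdy g x := by
  have h1 := (hf.differentiable one_ne_zero) x
  have h2 := (hg.differentiable one_ne_zero) x
  simp only [pdy]
  rw [fderiv_fun_mul h1 h2]
  simp; ring

/-- Chain rule for a scalar function of `f`. -/
lemma pdx_comp {c : ℝ → ℝ} {c' : ℝ} (hf : ContDiff ℝ 1 f) (x : ℝ × ℝ)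
    (hc : HasDerivAt c c' (f x)) : pdx (fun z => c (f z)) x = c' * pdx f x := by
  have h1 := ((hf.differentiable one_ne_zero) x).hasFDerivAt
  have := hc.comp_hasFDerivAt x h1
  simp only [pdx]
  rw [show (fun z => c (f z)) = c ∘ f from rfl, this.fderiv]
  simp

lemma pdy_comp {c : ℝ → ℝ} {c' : ℝ} (hf : ContDiff ℝ 1 f) (x : ℝ × ℝ)
    (hc : HasDerivAt c c' (f x)) : pdy (fun z => c (f z)) x = c' * pdy f x := by
  have h1 := ((hf.differentiable one_ne_zero) x).hasFDerivAt
  have := hc.comp_hasFDerivAt x h1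
  simp only [pdy]
  rw [show (fun z => c (f z)) = c ∘ f from rfl, this.fderiv]
  simp

lemma integral_fderiv_apply_eq_zero (hf : ContDiff ℝ 1 f) (hc : HasCompactSupport f)
    (v : ℝ × ℝ) : ∫ x, fderiv ℝ f x v = 0 := by
  have h1 : Integrable (fun x => fderiv ℝ f x v) :=
    ((hf.continuous_fderiv one_ne_zero).clm_apply continuous_const).integrable_of_hasCompactSupport
      (hc.fderiv_apply (𝕜 := ℝ) v)
  have h2 : Integrable f := hf.continuous.integrable_of_hasCompactSupport hc
  have := integral_mul_fderiv_eq_neg_fderiv_mul_of_integrable (μ := (volume : Measure (ℝ × ℝ)))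
    (f := fun _ => (1 : ℝ)) (g := f) (v := v) (by simp) (by simpa using h1) (by simpa using h2)
    (by simp) (fun x _ => (hf.differentiable one_ne_zero) x)
  simpa using this

lemma integral_pdx_eq_zero (hf : ContDiff ℝ 1 f) (hc : HasCompactSupport f) :
    ∫ x, pdx f x = 0 := integral_fderiv_apply_eq_zero hf hc _

lemma integral_pdy_eq_zero (hf : ContDiff ℝ 1 f) (hc : HasCompactSupport f) :
    ∫ x, pdy f x = 0 := integral_fderiv_apply_eq_zero hf hc _

/-- Differentiation of `h ↦ ∫ f (x + h e₁) g x` at `h = 0`. -/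
lemma hasDerivAt_integral_translate (hf : ContDiff ℝ 1 f) (hfc : HasCompactSupport f)
    (hg : Continuous g) (hgc : HasCompactSupport g) :
    HasDerivAt (fun h : ℝ => ∫ x : ℝ × ℝ, f (x + h • ((1 : ℝ), (0 : ℝ))) * g x)
      (∫ x, pdx f x * g x) 0 := by
  obtain ⟨C, hC⟩ := (hasCompactSupport_pdx hfc).exists_bound_of_continuous (continuous_pdx hf)
  have hfcont := hf.continuous
  have hpc := continuous_pdx hf
  have key := hasDerivAt_integral_of_dominated_loc_of_deriv_le
    (μ := (volume : Measure (ℝ × ℝ))) (s := univ) (x₀ := (0 : ℝ))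
    (F := fun h x => f (x + h • ((1 : ℝ), (0 : ℝ))) * g x)
    (F' := fun h x => pdx f (x + h • ((1 : ℝ), (0 : ℝ))) * g x)
    (bound := fun x => C * ‖g x‖) univ_mem
    (Eventually.of_forall fun h => (by fun_prop : Continuous _).aestronglyMeasurable)
    ((by fun_prop : Continuous _).integrable_of_hasCompactSupport hgc.mul_left)
    ((by fun_prop : Continuous _).aestronglyMeasurable)
    (Eventually.of_forall fun x h _ => ?_)
    ((hg.norm.integrable_of_hasCompactSupport hgc.norm).const_mul C)
    (Eventually.of_forall fun x h _ => ?_)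
  · simpa using key.2
  · rw [norm_mul]
    exact mul_le_mul_of_nonneg_right (hC _) (norm_nonneg _)
  · have h1 : HasDerivAt (fun h : ℝ => x + h • ((1 : ℝ), (0 : ℝ))) ((1 : ℝ), (0 : ℝ)) h := by
      have := ((hasDerivAt_id h).smul_const ((1 : ℝ), (0 : ℝ))).const_add x
      simpa using this
    have h2 := ((hf.differentiable one_ne_zero) (x + h • ((1 : ℝ), (0 : ℝ)))).hasFDerivAt
    exact (h2.comp_hasDerivAt h h1).mul_const (g x)

/-- `∫ df ∧ dg = 0` for compactly supported functions that are merely `C¹`: integrate by parts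
in `y` after a translation in `x`, and differentiate in the translation parameter. -/
lemma integral_jacobian_eq_zero (hf : ContDiff ℝ 1 f) (hfc : HasCompactSupport f)
    (hg : ContDiff ℝ 1 g) (hgc : HasCompactSupport g) :
    ∫ x, (pdx f x * pdy g x - pdy f x * pdx g x) = 0 := by
  have h1 := hasDerivAt_integral_translate hf hfc (continuous_pdy hg) (hasCompactSupport_pdy hgc)
  have h2 := hasDerivAt_integral_translate hg hgc (continuous_pdy hf) (hasCompactSupport_pdy hfc)
  have h3 : HasDerivAt (fun h : ℝ => -∫ x : ℝ × ℝ, g (x + (-h) • ((1 : ℝ), (0 : ℝ))) * pdy f x)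
      (∫ x, pdx g x * pdy f x) 0 := by
    have h2' : HasDerivAt (fun h : ℝ => ∫ x : ℝ × ℝ, g (x + h • ((1 : ℝ), (0 : ℝ))) * pdy f x)
      (∫ x, pdx g x * pdy f x) (-(0:ℝ)) := by simpa using h2
    have := (h2'.comp (0 : ℝ) (hasDerivAt_neg (0 : ℝ))).neg
    exact this.congr_deriv (by ring)
  have heq : (fun h : ℝ => ∫ x : ℝ × ℝ, f (x + h • ((1 : ℝ), (0 : ℝ))) * pdy g x)
      = fun h : ℝ => -∫ x : ℝ × ℝ, g (x + (-h) • ((1 : ℝ), (0 : ℝ))) * pdy f x := by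
    funext h
    set v : ℝ × ℝ := h • ((1 : ℝ), (0 : ℝ)) with hv
    have hT : ContDiff ℝ 1 (fun x => f (x + v)) := hf.comp (by fun_prop)
    have hpT : ∀ x, pdy (fun x => f (x + v)) x = pdy f (x + v) := fun x => by
      simp only [pdy]; rw [fderiv_comp_add_right]
    have e1 := integral_pdy_eq_zero (hT.mul hg) (hgc.mul_left)
    have hfcont := hf.continuous
    have hgcont := hg.continuous
    have hpf := continuous_pdy hf
    have hpg := continuous_pdy hg
    have i1 : Integrable (fun x => pdy f (x + v) * g x) :=
      (by fun_prop : Continuous _).integrable_of_hasCompactSupport hgc.mul_left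
    have i2 : Integrable (fun x => f (x + v) * pdy g x) :=
      (by fun_prop : Continuous _).integrable_of_hasCompactSupport
        (hasCompactSupport_pdy hgc).mul_left
    have e2 : ∫ x, pdy (fun z => f (z + v) * g z) x
        = (∫ x, pdy f (x + v) * g x) + ∫ x, f (x + v) * pdy g x := by
      rw [← integral_add i1 i2]
      refine integral_congr_ae (Eventually.of_forall fun x => ?_)
      simp only
      rw [pdy_mul hT hg, hpT]
    have e3 : ∫ x, pdy f (x + v) * g x = ∫ x, g (x + (-h) • ((1 : ℝ), (0 : ℝ))) * pdy f x := by
      rw [← integral_add_right_eq_self (μ := (volume : Measure (ℝ × ℝ)))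
        (fun x => g (x + (-h) • ((1 : ℝ), (0 : ℝ))) * pdy f x) v]
      refine integral_congr_ae (Eventually.of_forall fun x => ?_)
      simp only [hv, neg_smul, add_neg_cancel_right]
      ring
    have e4 : ∫ x, pdy (fun z => f (z + v) * g z) x = 0 := e1
    rw [e2, e3] at e4
    linarith
  rw [heq] at h1
  have := h1.unique h3
  have hpf := continuous_pdy hf
  have hpg := continuous_pdy hg
  have hpf' := continuous_pdx hf
  have hpg' := continuous_pdx hg
  rw [integral_sub, this, sub_eq_zero]
  · simp_rw [mul_comm]
  · exact (by fun_prop : Continuous _).integrable_of_hasCompactSupport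
      (hasCompactSupport_pdy hgc).mul_left
  · exact (by fun_prop : Continuous _).integrable_of_hasCompactSupport
      (hasCompactSupport_pdx hgc).mul_left

end parts

/-- The `C¹` cutoff profile `t ↦ ((1 - t)⁺)²`. -/
def cut (t : ℝ) : ℝ := (max (1 - t) 0) ^ 2

lemma hasDerivAt_posPart_sq (t : ℝ) : HasDerivAt (fun s : ℝ => (max s 0) ^ 2) (2 * max t 0) t := by
  rcases lt_trichotomy t 0 with h | h | h
  · have : (fun s : ℝ => (max s 0) ^ 2) =ᶠ[nhds t] fun _ => 0 := by
      filter_upwards [gt_mem_nhds h] with s hs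
      rw [max_eq_right hs.le]; simp
    rw [max_eq_right h.le, mul_zero]
    exact (hasDerivAt_const t (0:ℝ)).congr_of_eventuallyEq this
  · subst h
    rw [max_self, mul_zero, hasDerivAt_iff_isLittleO_nhds_zero]
    have h1 : (fun h : ℝ => h ^ 2) =o[nhds 0] fun h : ℝ => h := by
      have := Asymptotics.isLittleO_pow_id (𝕜 := ℝ) (n := 2) (by norm_num)
      simpa using this
    refine Asymptotics.IsBigO.trans_isLittleO ?_ h1
    refine Asymptotics.IsBigO.of_bound 1 (Eventually.of_forall fun s => ?_)
    simp only [zero_add, max_self, smul_zero, sub_zero, one_mul, norm_pow, Real.norm_eq_abs]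
    norm_num
    rcases le_total s 0 with h | h
    · rw [max_eq_right h]; simp [sq_nonneg]
    · rw [max_eq_left h]
  · have : (fun s : ℝ => (max s 0) ^ 2) =ᶠ[nhds t] fun s => s ^ 2 := by
      filter_upwards [lt_mem_nhds h] with s hs
      rw [max_eq_left hs.le]
    rw [max_eq_left h.le]
    refine HasDerivAt.congr_of_eventuallyEq ?_ this
    simpa using hasDerivAt_pow 2 t

lemma contDiff_posPart_sq : ContDiff ℝ 1 (fun s : ℝ => (max s 0) ^ 2) := by
  rw [contDiff_one_iff_deriv]
  refine ⟨fun t => (hasDerivAt_posPart_sq t).differentiableAt, ?_⟩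
  have : deriv (fun s : ℝ => (max s 0) ^ 2) = fun t => 2 * max t 0 :=
    funext fun t => (hasDerivAt_posPart_sq t).deriv
  rw [this]; fun_prop

lemma contDiff_cut : ContDiff ℝ 1 cut :=
  contDiff_posPart_sq.comp (contDiff_const.sub contDiff_id)

lemma hasDerivAt_cut (t : ℝ) : HasDerivAt cut (-(2 * max (1 - t) 0)) t := by
  have := (hasDerivAt_posPart_sq (1 - t)).comp t ((hasDerivAt_id t).const_sub 1)
  exact this.congr_deriv (by ring)

/-! ### The normal field of a graph -/

section graph

/-- First horizontal component `u_x / W` of minus the upward unit normal. -/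
def Y₁ (u : ℝ × ℝ → ℝ) (x : ℝ × ℝ) : ℝ := pdx u x / Wgraph u x

/-- Second horizontal component `u_y / W` of minus the upward unit normal. -/
def Y₂ (u : ℝ × ℝ → ℝ) (x : ℝ × ℝ) : ℝ := pdy u x / Wgraph u x

/-- Squared norm of the second fundamental form of the graph. The Jacobian matrix of `(Y₁, Y₂)` is
the matrix of the shape operator, so this is the trace of its square. -/
def sffSq (u : ℝ × ℝ → ℝ) (x : ℝ × ℝ) : ℝ :=
  pdx (Y₁ u) x ^ 2 + 2 * (pdy (Y₁ u) x * pdx (Y₂ u) x) + pdy (Y₂ u) x ^ 2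

variable {u : ℝ × ℝ → ℝ}

lemma contDiff_pdx (hu : ContDiff ℝ 2 u) : ContDiff ℝ 1 (pdx u) :=
  (hu.fderiv_right (m := 1) (by norm_num)).clm_apply contDiff_const

lemma contDiff_pdy (hu : ContDiff ℝ 2 u) : ContDiff ℝ 1 (pdy u) :=
  (hu.fderiv_right (m := 1) (by norm_num)).clm_apply contDiff_const

lemma one_le_Wgraph (u : ℝ × ℝ → ℝ) (x : ℝ × ℝ) : 1 ≤ Wgraph u x := by
  rw [Wgraph, Real.one_le_sqrt]; nlinarith [sq_nonneg (pdx u x), sq_nonneg (pdy u x)]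

lemma Wgraph_pos (u : ℝ × ℝ → ℝ) (x : ℝ × ℝ) : 0 < Wgraph u x :=
  one_pos.trans_le (one_le_Wgraph u x)

lemma Wgraph_sq (u : ℝ × ℝ → ℝ) (x : ℝ × ℝ) :
    Wgraph u x ^ 2 = 1 + pdx u x ^ 2 + pdy u x ^ 2 := by
  rw [Wgraph, Real.sq_sqrt]; positivity

lemma contDiff_Wgraph (hu : ContDiff ℝ 2 u) : ContDiff ℝ 1 (Wgraph u) := by
  have h1 := contDiff_pdx hu
  have h2 := contDiff_pdy hu
  refine ContDiff.sqrt (by fun_prop) fun x => ?_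
  positivity

lemma contDiff_Y₁ (hu : ContDiff ℝ 2 u) : ContDiff ℝ 1 (Y₁ u) :=
  (contDiff_pdx hu).div (contDiff_Wgraph hu) fun x => (Wgraph_pos u x).ne'

lemma contDiff_Y₂ (hu : ContDiff ℝ 2 u) : ContDiff ℝ 1 (Y₂ u) :=
  (contDiff_pdy hu).div (contDiff_Wgraph hu) fun x => (Wgraph_pos u x).ne'

lemma continuous_sffSq (hu : ContDiff ℝ 2 u) : Continuous (sffSq u) := by
  have h1 := continuous_pdx (contDiff_Y₁ hu)
  have h2 := continuous_pdy (contDiff_Y₁ hu)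
  have h3 := continuous_pdx (contDiff_Y₂ hu)
  have h4 := continuous_pdy (contDiff_Y₂ hu)
  unfold sffSq; fun_prop

lemma hasCompactSupport_Y₁ (hc : HasCompactSupport u) : HasCompactSupport (Y₁ u) := by
  have : Y₁ u = fun x => pdx u x * (Wgraph u x)⁻¹ := by
    funext x; rw [Y₁, div_eq_mul_inv]
  rw [this]; exact (hasCompactSupport_pdx hc).mul_right

lemma hasCompactSupport_Y₂ (hc : HasCompactSupport u) : HasCompactSupport (Y₂ u) := by
  have : Y₂ u = fun x => pdy u x * (Wgraph u x)⁻¹ := by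
    funext x; rw [Y₂, div_eq_mul_inv]
  rw [this]; exact (hasCompactSupport_pdy hc).mul_right

lemma pdx_pdy_comm (hu : ContDiff ℝ 2 u) (x : ℝ × ℝ) : pdx (pdy u) x = pdy (pdx u) x := by
  have hs : IsSymmSndFDerivAt ℝ u x := hu.contDiffAt.isSymmSndFDerivAt (by simp)
  have hd : DifferentiableAt ℝ (fderiv ℝ u) x :=
    ((hu.fderiv_right (m := 1) (by norm_num)).differentiable one_ne_zero) x
  have h1 : pdx (pdy u) x = fderiv ℝ (fderiv ℝ u) x (1, 0) (0, 1) := by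
    have := hd.hasFDerivAt.clm_apply (hasFDerivAt_const ((0 : ℝ), (1 : ℝ)) x)
    have e : HasFDerivAt (pdy u) _ x := this
    show fderiv ℝ (pdy u) x (1, 0) = _
    rw [e.fderiv]; simp
  have h2 : pdy (pdx u) x = fderiv ℝ (fderiv ℝ u) x (0, 1) (1, 0) := by
    have := hd.hasFDerivAt.clm_apply (hasFDerivAt_const ((1 : ℝ), (0 : ℝ)) x)
    have e : HasFDerivAt (pdx u) _ x := this
    show fderiv ℝ (pdx u) x (0, 1) = _
    rw [e.fderiv]; simp
  rw [h1, h2]; exact hs _ _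

lemma pd_Wgraph_mul (hu : ContDiff ℝ 2 u) (x : ℝ × ℝ) :
    pdx (Wgraph u) x * Wgraph u x = pdx u x * pdx (pdx u) x + pdy u x * pdy (pdx u) x ∧
    pdy (Wgraph u) x * Wgraph u x = pdx u x * pdy (pdx u) x + pdy u x * pdy (pdy u) x := by
  have hp := contDiff_pdx hu
  have hq := contDiff_pdy hu
  have hW := contDiff_Wgraph hu
  have e3 : (fun z => Wgraph u z * Wgraph u z)
      = fun z => (fun t => 1 + t) (pdx u z * pdx u z + pdy u z * pdy u z) := by
    funext z; have := Wgraph_sq u z; nlinarith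
  have d1 : ∀ t, HasDerivAt (fun t : ℝ => 1 + t) 1 t := fun t => (hasDerivAt_id t).const_add 1
  have hpp : ContDiff ℝ 1 (fun z => pdx u z * pdx u z) := hp.mul hp
  have hqq : ContDiff ℝ 1 (fun z => pdy u z * pdy u z) := hq.mul hq
  have padd : ∀ f g : ℝ × ℝ → ℝ, ContDiff ℝ 1 f → ContDiff ℝ 1 g → ∀ x,
      pdx (fun z => f z + g z) x = pdx f x + pdx g x ∧
      pdy (fun z => f z + g z) x = pdy f x + pdy g x := by
    intro f g hf hg x
    simp only [pdx, pdy]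
    rw [fderiv_fun_add ((hf.differentiable one_ne_zero) x) ((hg.differentiable one_ne_zero) x)]
    simp
  constructor
  · have h := congrArg (fun f => pdx f x) e3
    simp only at h
    rw [pdx_mul hW hW, pdx_comp (f := fun z => pdx u z * pdx u z + pdy u z * pdy u z)
      (hpp.add hqq) x (d1 _), (padd _ _ hpp hqq x).1, pdx_mul hp hp, pdx_mul hq hq,
      pdx_pdy_comm hu] at h
    linarith
  · have h := congrArg (fun f => pdy f x) e3
    simp only at h
    rw [pdy_mul hW hW, pdy_comp (f := fun z => pdx u z * pdx u z + pdy u z * pdy u z)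
      (hpp.add hqq) x (d1 _), (padd _ _ hpp hqq x).2, pdy_mul hp hp, pdy_mul hq hq] at h
    linarith

/-- The shape operator in terms of the Hessian of `u`. -/
lemma shape_eq (hu : ContDiff ℝ 2 u) (x : ℝ × ℝ) :
    pdx (Y₁ u) x * Wgraph u x ^ 3 = (1 + pdy u x ^ 2) * pdx (pdx u) x
        - pdx u x * pdy u x * pdy (pdx u) x ∧
    pdy (Y₁ u) x * Wgraph u x ^ 3 = (1 + pdy u x ^ 2) * pdy (pdx u) x
        - pdx u x * pdy u x * pdy (pdy u) x ∧
    pdx (Y₂ u) x * Wgraph u x ^ 3 = (1 + pdx u x ^ 2) * pdy (pdx u) x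
        - pdx u x * pdy u x * pdx (pdx u) x ∧
    pdy (Y₂ u) x * Wgraph u x ^ 3 = (1 + pdx u x ^ 2) * pdy (pdy u) x
        - pdx u x * pdy u x * pdy (pdx u) x := by
  have hW := contDiff_Wgraph hu
  have hY₁ := contDiff_Y₁ hu
  have hY₂ := contDiff_Y₂ hu
  have hWp := Wgraph_pos u x
  have hsq := Wgraph_sq u x
  have e1 : (fun z => Y₁ u z * Wgraph u z) = pdx u := by
    funext z; rw [Y₁, div_mul_cancel₀ _ (Wgraph_pos u z).ne']
  have e2 : (fun z => Y₂ u z * Wgraph u z) = pdy u := by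
    funext z; rw [Y₂, div_mul_cancel₀ _ (Wgraph_pos u z).ne']
  obtain ⟨w1, w2⟩ := pd_Wgraph_mul hu x
  have a1 : pdx (fun z => Y₁ u z * Wgraph u z) x = pdx (pdx u) x := by rw [e1]
  have a2 : pdy (fun z => Y₁ u z * Wgraph u z) x = pdy (pdx u) x := by rw [e1]
  have a3 : pdx (fun z => Y₂ u z * Wgraph u z) x = pdx (pdy u) x := by rw [e2]
  have a4 : pdy (fun z => Y₂ u z * Wgraph u z) x = pdy (pdy u) x := by rw [e2]
  rw [pdx_mul hY₁ hW] at a1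
  rw [pdy_mul hY₁ hW] at a2
  rw [pdx_mul hY₂ hW, pdx_pdy_comm hu] at a3
  rw [pdy_mul hY₂ hW] at a4
  have b1 : Y₁ u x * Wgraph u x = pdx u x := congrFun e1 x
  have b2 : Y₂ u x * Wgraph u x = pdy u x := congrFun e2 x
  refine ⟨?_, ?_, ?_, ?_⟩
  · linear_combination Wgraph u x ^ 2 * a1 - pdx (Wgraph u) x * Wgraph u x * b1
      - pdx u x * w1 + pdx (pdx u) x * hsq
  · linear_combination Wgraph u x ^ 2 * a2 - pdy (Wgraph u) x * Wgraph u x * b1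
      - pdx u x * w2 + pdy (pdx u) x * hsq
  · linear_combination Wgraph u x ^ 2 * a3 - pdx (Wgraph u) x * Wgraph u x * b2
      - pdy u x * w1 + pdy (pdx u) x * hsq
  · linear_combination Wgraph u x ^ 2 * a4 - pdy (Wgraph u) x * Wgraph u x * b2
      - pdy u x * w2 + pdy (pdy u) x * hsq

/-- The Hessian of `u` in terms of the shape operator. -/
lemma hess_eq (hu : ContDiff ℝ 2 u) (x : ℝ × ℝ) :
    pdx (pdx u) x = Wgraph u x * ((1 + pdx u x ^ 2) * pdx (Y₁ u) x
        + pdx u x * pdy u x * pdx (Y₂ u) x) ∧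
    pdy (pdx u) x = Wgraph u x * ((1 + pdx u x ^ 2) * pdy (Y₁ u) x
        + pdx u x * pdy u x * pdy (Y₂ u) x) ∧
    pdy (pdx u) x = Wgraph u x * (pdx u x * pdy u x * pdx (Y₁ u) x
        + (1 + pdy u x ^ 2) * pdx (Y₂ u) x) ∧
    pdy (pdy u) x = Wgraph u x * (pdx u x * pdy u x * pdy (Y₁ u) x
        + (1 + pdy u x ^ 2) * pdy (Y₂ u) x) := by
  obtain ⟨h1, h2, h3, h4⟩ := shape_eq hu x
  have hsq := Wgraph_sq u x
  have hW : Wgraph u x ^ 2 ≠ 0 := (pow_pos (Wgraph_pos u x) 2).ne'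
  set p := pdx u x
  set q := pdy u x
  set W := Wgraph u x
  refine ⟨?_, ?_, ?_, ?_⟩ <;> apply mul_left_cancel₀ hW
  · linear_combination -(1 + p ^ 2) * h1 - p * q * h3 + pdx (pdx u) x * hsq
  · linear_combination -(1 + p ^ 2) * h2 - p * q * h4 + pdy (pdx u) x * hsq
  · linear_combination -(p * q) * h1 - (1 + q ^ 2) * h3 + pdy (pdx u) x * hsq
  · linear_combination -(p * q) * h2 - (1 + q ^ 2) * h4 + pdy (pdy u) x * hsq

lemma grad_Wgraph (hu : ContDiff ℝ 2 u) (x : ℝ × ℝ) :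
    pdx (Wgraph u) x = Wgraph u x ^ 2 * (pdx u x * pdx (Y₁ u) x + pdy u x * pdx (Y₂ u) x) ∧
    pdy (Wgraph u) x = Wgraph u x ^ 2 * (pdx u x * pdy (Y₁ u) x + pdy u x * pdy (Y₂ u) x) := by
  obtain ⟨g1, g2, g3, g4⟩ := hess_eq hu x
  obtain ⟨w1, w2⟩ := pd_Wgraph_mul hu x
  have hsq := Wgraph_sq u x
  have hW := (Wgraph_pos u x).ne'
  constructor <;> apply mul_right_cancel₀ hW
  · rw [w1, g1, g3]
    linear_combination -(Wgraph u x * (pdx u x * pdx (Y₁ u) x + pdy u x * pdx (Y₂ u) x)) * hsq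
  · rw [w2, g2, g4]
    linear_combination -(Wgraph u x * (pdx u x * pdy (Y₁ u) x + pdy u x * pdy (Y₂ u) x)) * hsq

/-- Self-adjointness of the shape operator with respect to the induced metric. -/
lemma shape_symm (hu : ContDiff ℝ 2 u) (x : ℝ × ℝ) :
    (1 + pdx u x ^ 2) * pdy (Y₁ u) x + pdx u x * pdy u x * pdy (Y₂ u) x
      = pdx u x * pdy u x * pdx (Y₁ u) x + (1 + pdy u x ^ 2) * pdx (Y₂ u) x := by
  obtain ⟨-, h2, h3, -⟩ := hess_eq hu x
  exact mul_left_cancel₀ (Wgraph_pos u x).ne' (h2.symm.trans h3)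

/-- `W² |A|²` is the sum over the three components of the unit normal of `W²` times their squared
gradients on the surface. -/
lemma sffSq_identity {p q a b c d : ℝ}
    (h : (1 + p ^ 2) * b + p * q * d = p * q * a + (1 + q ^ 2) * c) :
    (1 + p ^ 2 + q ^ 2) * (a ^ 2 + 2 * (b * c) + d ^ 2) =
      (a ^ 2 + b ^ 2 + (a * q - b * p) ^ 2) + (c ^ 2 + d ^ 2 + (c * q - d * p) ^ 2) +
      ((p * a + q * c) ^ 2 + (p * b + q * d) ^ 2
        + ((p * a + q * c) * q - (p * b + q * d) * p) ^ 2) := by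
  linear_combination (-((1 + p ^ 2) * b + p * q * d - (p * q * a + (1 + q ^ 2) * c))) * h

lemma grad_Y_le (hu : ContDiff ℝ 2 u) (x : ℝ × ℝ) :
    pdx (Y₁ u) x ^ 2 + pdy (Y₁ u) x ^ 2 + (pdx (Y₁ u) x * pdy u x - pdy (Y₁ u) x * pdx u x) ^ 2
      ≤ Wgraph u x ^ 2 * sffSq u x ∧
    pdx (Y₂ u) x ^ 2 + pdy (Y₂ u) x ^ 2 + (pdx (Y₂ u) x * pdy u x - pdy (Y₂ u) x * pdx u x) ^ 2
      ≤ Wgraph u x ^ 2 * sffSq u x := by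
  have h := sffSq_identity (shape_symm hu x)
  rw [sffSq, Wgraph_sq, h]
  constructor
  · have : 0 ≤ (pdx (Y₂ u) x ^ 2 + pdy (Y₂ u) x ^ 2
      + (pdx (Y₂ u) x * pdy u x - pdy (Y₂ u) x * pdx u x) ^ 2) +
      ((pdx u x * pdx (Y₁ u) x + pdy u x * pdx (Y₂ u) x) ^ 2
        + (pdx u x * pdy (Y₁ u) x + pdy u x * pdy (Y₂ u) x) ^ 2
        + ((pdx u x * pdx (Y₁ u) x + pdy u x * pdx (Y₂ u) x) * pdy u x
          - (pdx u x * pdy (Y₁ u) x + pdy u x * pdy (Y₂ u) x) * pdx u x) ^ 2) := by positivity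
    linarith
  · have : 0 ≤ (pdx (Y₁ u) x ^ 2 + pdy (Y₁ u) x ^ 2
      + (pdx (Y₁ u) x * pdy u x - pdy (Y₁ u) x * pdx u x) ^ 2) +
      ((pdx u x * pdx (Y₁ u) x + pdy u x * pdx (Y₂ u) x) ^ 2
        + (pdx u x * pdy (Y₁ u) x + pdy u x * pdy (Y₂ u) x) ^ 2
        + ((pdx u x * pdx (Y₁ u) x + pdy u x * pdx (Y₂ u) x) * pdy u x
          - (pdx u x * pdy (Y₁ u) x + pdy u x * pdy (Y₂ u) x) * pdx u x) ^ 2) := by positivity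
    linarith

lemma sffSq_nonneg (hu : ContDiff ℝ 2 u) (x : ℝ × ℝ) : 0 ≤ sffSq u x := by
  have h := (grad_Y_le hu x).1
  have hW := pow_pos (Wgraph_pos u x) 2
  have : 0 ≤ Wgraph u x ^ 2 * sffSq u x := le_trans (by positivity) h
  exact nonneg_of_mul_nonneg_right this hW

lemma Y_sq (u : ℝ × ℝ → ℝ) (x : ℝ × ℝ) :
    Wgraph u x ^ 2 * (1 - Y₁ u x ^ 2 - Y₂ u x ^ 2) = 1 := by
  have hW := (Wgraph_pos u x).ne'
  have := Wgraph_sq u x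
  rw [Y₁, Y₂]; field_simp; linarith

/-- The squared distance in space from the point of the graph above `Q`. -/
def distSq (u : ℝ × ℝ → ℝ) (Q x : ℝ × ℝ) : ℝ :=
  (x.1 - Q.1) ^ 2 + (x.2 - Q.2) ^ 2 + (u x - u Q) ^ 2

lemma contDiff_distSq (hu : ContDiff ℝ 2 u) (Q : ℝ × ℝ) : ContDiff ℝ 1 (distSq u Q) := by
  have : ContDiff ℝ 1 u := hu.of_le (by norm_num)
  unfold distSq; fun_prop

lemma pd_distSq (hu : ContDiff ℝ 2 u) (Q x : ℝ × ℝ) :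
    pdx (distSq u Q) x = 2 * (x.1 - Q.1) + 2 * (u x - u Q) * pdx u x ∧
    pdy (distSq u Q) x = 2 * (x.2 - Q.2) + 2 * (u x - u Q) * pdy u x := by
  have h0 := ((hu.differentiable two_ne_zero) x).hasFDerivAt
  have h1 := ((hasFDerivAt_fst (𝕜 := ℝ) (p := x)).sub_const Q.1).pow 2
  have h2 := ((hasFDerivAt_snd (𝕜 := ℝ) (p := x)).sub_const Q.2).pow 2
  have h3 := (h0.sub_const (u Q)).pow 2
  have h : HasFDerivAt (distSq u Q) _ x := (h1.add h2).add h3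
  simp only [pdx, pdy]
  rw [h.fderiv]
  constructor <;> simp

/-- On the surface, `|∇ distSq| ≤ 6 r` and `|∇ Yᵢ| ≤ |A|`, hence this bound for the Jacobian. -/
lemma jac_bound {p q W S X Z U a b r : ℝ} (hW : 0 ≤ W) (hS : 0 ≤ S) (hr : 0 ≤ r)
    (h : a ^ 2 + b ^ 2 + (a * q - b * p) ^ 2 ≤ W ^ 2 * S)
    (hd : X ^ 2 + Z ^ 2 + U ^ 2 ≤ r ^ 2) :
    |(2 * X + 2 * U * p) * b - (2 * Z + 2 * U * q) * a| ≤ 6 * r * (W * √S) := by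
  have hk : 0 ≤ W * √S := mul_nonneg hW (Real.sqrt_nonneg _)
  have hk2 : (W * √S) ^ 2 = W ^ 2 * S := by rw [mul_pow, Real.sq_sqrt hS]
  rw [← hk2] at h
  set k := W * √S
  have ha : |a| ≤ k := abs_le_of_sq_le_sq (by nlinarith [sq_nonneg b, sq_nonneg (a*q-b*p)]) hk
  have hb : |b| ≤ k := abs_le_of_sq_le_sq (by nlinarith [sq_nonneg a, sq_nonneg (a*q-b*p)]) hk
  have hc : |a * q - b * p| ≤ k := abs_le_of_sq_le_sq (by nlinarith [sq_nonneg a, sq_nonneg b]) hk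
  have hX : |X| ≤ r := abs_le_of_sq_le_sq (by nlinarith [sq_nonneg Z, sq_nonneg U]) hr
  have hZ : |Z| ≤ r := abs_le_of_sq_le_sq (by nlinarith [sq_nonneg X, sq_nonneg U]) hr
  have hU : |U| ≤ r := abs_le_of_sq_le_sq (by nlinarith [sq_nonneg Z, sq_nonneg X]) hr
  have e : (2 * X + 2 * U * p) * b - (2 * Z + 2 * U * q) * a
      = 2 * (X * b) + (-(2 * (Z * a)) + -(2 * (U * (a * q - b * p)))) := by ring
  rw [e]
  have m1 := mul_le_mul hX hb (abs_nonneg _) hr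
  have m2 := mul_le_mul hZ ha (abs_nonneg _) hr
  have m3 := mul_le_mul hU hc (abs_nonneg _) hr
  rw [← abs_mul] at m1 m2 m3
  refine (abs_add_le _ _).trans ?_
  have n1 := abs_add_le (-(2 * (Z * a))) (-(2 * (U * (a * q - b * p))))
  rw [abs_neg, abs_neg, abs_mul 2, abs_mul 2 (U * _)] at n1
  rw [abs_mul 2 (X * b)]
  rw [abs_two] at n1 ⊢
  linarith

lemma jac_distSq_le (hu : ContDiff ℝ 2 u) {Q x : ℝ × ℝ} {r : ℝ} (hr : 0 ≤ r)
    (hx : distSq u Q x ≤ r ^ 2) :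
    |pdx (distSq u Q) x * pdy (Y₁ u) x - pdy (distSq u Q) x * pdx (Y₁ u) x|
      ≤ 6 * r * (Wgraph u x * √(sffSq u x)) ∧
    |pdx (distSq u Q) x * pdy (Y₂ u) x - pdy (distSq u Q) x * pdx (Y₂ u) x|
      ≤ 6 * r * (Wgraph u x * √(sffSq u x)) := by
  obtain ⟨e1, e2⟩ := pd_distSq hu Q x
  rw [e1, e2]
  exact ⟨jac_bound (Wgraph_pos u x).le (sffSq_nonneg hu x) hr (grad_Y_le hu x).1 hx,
    jac_bound (Wgraph_pos u x).le (sffSq_nonneg hu x) hr (grad_Y_le hu x).2 hx⟩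

lemma norm_lt_of_distSq_lt {Q x : ℝ × ℝ} {r : ℝ} (hr : 0 < r) (hx : distSq u Q x < r ^ 2) :
    x ∈ Metric.ball Q r := by
  unfold distSq at hx
  rw [Metric.mem_ball, Prod.dist_eq, max_lt_iff, Real.dist_eq, Real.dist_eq]
  exact ⟨abs_lt_of_sq_lt_sq (by nlinarith [sq_nonneg (x.2 - Q.2), sq_nonneg (u x - u Q)]) hr.le,
    abs_lt_of_sq_lt_sq (by nlinarith [sq_nonneg (x.1 - Q.1), sq_nonneg (u x - u Q)]) hr.le⟩

end graph

/-! ### Area bound -/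

section area

variable {u : ℝ × ℝ → ℝ} {Q : ℝ × ℝ} {H R r : ℝ}

lemma integral_div_test (hu : ContDiff ℝ 2 u) {φ : ℝ × ℝ → ℝ} (hφ : ContDiff ℝ 1 φ)
    (hφc : HasCompactSupport φ) :
    ∫ x, ((pdx (Y₁ u) x + pdy (Y₂ u) x) * φ x + (Y₁ u x * pdx φ x + Y₂ u x * pdy φ x)) = 0 := by
  have h1 := contDiff_Y₁ hu
  have h2 := contDiff_Y₂ hu
  have e1 := integral_pdx_eq_zero (h1.mul hφ) hφc.mul_left
  have e2 := integral_pdy_eq_zero (h2.mul hφ) hφc.mul_left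
  have i1 : Integrable (pdx fun x => Y₁ u x * φ x) :=
    (continuous_pdx (h1.mul hφ)).integrable_of_hasCompactSupport
      (hasCompactSupport_pdx hφc.mul_left)
  have i2 : Integrable (pdy fun x => Y₂ u x * φ x) :=
    (continuous_pdy (h2.mul hφ)).integrable_of_hasCompactSupport
      (hasCompactSupport_pdy hφc.mul_left)
  have e3 : ∫ x, (pdx (fun x => Y₁ u x * φ x) x + pdy (fun x => Y₂ u x * φ x) x) = 0 := by
    rw [integral_add i1 i2]
    calc _ = (0 : ℝ) + 0 := congrArg₂ _ e1 e2
      _ = 0 := add_zero 0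
  rw [← e3]
  refine integral_congr_ae (Eventually.of_forall fun x => ?_)
  simp only
  rw [pdx_mul h1 hφ, pdy_mul h2 hφ]
  ring

lemma continuous_Wgraph (hu : ContDiff ℝ 2 u) : Continuous (Wgraph u) :=
  (contDiff_Wgraph hu).continuous

lemma abs_Y_le (u : ℝ × ℝ → ℝ) (x : ℝ × ℝ) : |Y₁ u x| ≤ 1 ∧ |Y₂ u x| ≤ 1 := by
  have h := Y_sq u x
  have hW := pow_pos (Wgraph_pos u x) 2
  have : 0 < 1 - Y₁ u x ^ 2 - Y₂ u x ^ 2 := by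
    by_contra hn
    nlinarith
  exact ⟨abs_le_one_iff_mul_self_le_one.2 (by nlinarith [sq_nonneg (Y₂ u x)]),
    abs_le_one_iff_mul_self_le_one.2 (by nlinarith [sq_nonneg (Y₁ u x)])⟩

/-- Pointwise form of the area bound: `T`, `T'` and `χ`, `χx`, `χy` are the values of the two
factors of the test function and of their derivatives. -/
lemma area_pointwise {p q W T T' χ χx χy y₁ y₂ : ℝ} (hr : 0 < r) (hH : 0 < H) (hHr : H * r ≤ 2)
    (hW : 1 ≤ W) (hy₁ : |y₁| ≤ 1) (hy₂ : |y₂| ≤ 1) (hpy : p * y₁ + q * y₂ = W - 1 / W)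
    (hT : |T| ≤ 2 * r) (hχ0 : 0 ≤ χ) (hχ1 : χ ≤ 1) (hx : |χx| ≤ 2 / r)
    (hy : |χy| ≤ 2 / r) (c : ℝ) (hc1 : c ≤ 1) (hc : c ≤ T' * χ) :
    c * W - 17 ≤ 2 * H * (T * χ) + (y₁ * (T' * p * χ + T * χx) + y₂ * (T' * q * χ + T * χy)) := by
  have h1 : |H * (T * χ)| ≤ 4 := by
    rw [abs_mul, abs_mul, abs_of_pos hH, abs_of_nonneg hχ0]
    have := mul_le_mul hT hχ1 hχ0 (by positivity)
    nlinarith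
  have h2 : ∀ y v : ℝ, |y| ≤ 1 → |v| ≤ 2 / r → |y * (T * v)| ≤ 4 := by
    intro y v hy hv
    rw [abs_mul, abs_mul]
    have a := mul_le_mul hT hv (abs_nonneg _) (by positivity)
    have b := mul_le_mul hy a (by positivity) zero_le_one
    have : 1 * (2 * r * (2 / r)) = 4 := by field_simp; norm_num
    linarith
  have h3 := h2 y₁ χx hy₁ hx
  have h4 := h2 y₂ χy hy₂ hy
  have h5 : c * W - 1 ≤ T' * χ * (W - 1 / W) := by
    have hw : 1 / W ≤ 1 := by rw [div_le_one (by linarith)]; exact hW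
    have h0 : 0 ≤ W - 1 / W := by linarith
    have := mul_le_mul_of_nonneg_right hc h0
    nlinarith [one_div_pos.2 (one_pos.trans_le hW)]
  rw [abs_le] at h1 h3 h4
  rw [← hpy] at h5
  nlinarith

lemma volume_closedBall_prod (Q : ℝ × ℝ) (hr : 0 ≤ r) :
    volume.real (Metric.closedBall Q r) = 4 * r ^ 2 := by
  rw [← Prod.mk.eta (p := Q), ← closedBall_prod_same, measureReal_def, Measure.volume_eq_prod,
    Measure.prod_prod, Real.volume_closedBall, Real.volume_closedBall, ← ENNReal.ofReal_mul (by positivity),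
    ENNReal.toReal_ofReal (by positivity)]
  ring

lemma integrableOn_of_subset_ball {f : ℝ × ℝ → ℝ} (hf : Continuous f) {s : Set (ℝ × ℝ)}
    (hs : s ⊆ Metric.closedBall Q r) : IntegrableOn f s :=
  (hf.continuousOn.integrableOn_compact (isCompact_closedBall Q r)).mono_set hs

lemma isOpen_distSq_lt (hu : ContDiff ℝ 2 u) (Q : ℝ × ℝ) (s : ℝ) :
    IsOpen {x | distSq u Q x < s} :=
  isOpen_lt (contDiff_distSq hu Q).continuous continuous_const

/-- Extrinsic balls of radius `r` on the graph have area `O(r²)`. The test function in the divergence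
equation is `r arctan ((u - u Q) / r)` times a cutoff in the plane. -/
lemma area_bound (hu : ContDiff ℝ 2 u) (hH : 0 < H) (hHR : H * R ≤ 1)
    (heq : ∀ x ∈ Metric.ball Q (5 * R), pdx (Y₁ u) x + pdy (Y₂ u) x = 2 * H)
    (hr : 0 < r) (hrR : r ≤ 2 * R) :
    ∫ x in {x | distSq u Q x < r ^ 2}, Wgraph u x ≤ 1000 * r ^ 2 := by
  have hu1 : ContDiff ℝ 1 u := hu.of_le (by norm_num)
  set A : Set (ℝ × ℝ) := {x | distSq u Q x < r ^ 2}
  set B : Set (ℝ × ℝ) := Metric.closedBall Q (2 * r)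
  let ρ : ℝ × ℝ → ℝ := fun x => ((x.1 - Q.1) ^ 2 + (x.2 - Q.2) ^ 2) / (4 * r ^ 2)
  let c : ℝ → ℝ := fun v => r * arctan ((v - u Q) / r)
  let φ : ℝ × ℝ → ℝ := fun x => c (u x) * cut (ρ x)
  have hρ : ContDiff ℝ 1 ρ := by fun_prop
  have hc : ContDiff ℝ 1 c := by
    refine contDiff_const.mul (contDiff_arctan.comp ?_)
    fun_prop
  have hcu : ContDiff ℝ 1 (fun x => c (u x)) := hc.comp hu1
  have hcρ : ContDiff ℝ 1 (fun x => cut (ρ x)) := contDiff_cut.comp hρ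
  have hφ : ContDiff ℝ 1 φ := hcu.mul hcρ
  have hρB : ∀ x, x ∉ B → 1 ≤ ρ x := by
    intro x hx
    by_contra hlt
    apply hx
    have h1 : (x.1 - Q.1) ^ 2 + (x.2 - Q.2) ^ 2 < (2 * r) ^ 2 := by
      have := (div_lt_one (by positivity)).1 (not_le.1 hlt)
      linarith
    rw [Metric.mem_closedBall, Prod.dist_eq, max_le_iff, Real.dist_eq, Real.dist_eq]
    exact ⟨abs_le_of_sq_le_sq (by nlinarith [sq_nonneg (x.2 - Q.2)]) (by positivity),
      abs_le_of_sq_le_sq (by nlinarith [sq_nonneg (x.1 - Q.1)]) (by positivity)⟩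
  have hφ0 : ∀ x, x ∉ B → φ x = 0 := by
    intro x hx
    have := hρB x hx
    simp only [φ, cut]
    rw [max_eq_right (by linarith)]; ring
  have hφc : HasCompactSupport φ := HasCompactSupport.intro (isCompact_closedBall Q (2 * r)) hφ0
  have hdc : ∀ v, HasDerivAt c (1 / (1 + ((v - u Q) / r) ^ 2)) v := by
    intro v
    have h1 : HasDerivAt (fun v => (v - u Q) / r) (1 / r) v :=
      ((hasDerivAt_id v).sub_const (u Q)).div_const r
    refine (h1.arctan.const_mul r).congr_deriv ?_
    field_simp
  have hρd : ∀ x, pdx ρ x = 2 * (x.1 - Q.1) / (4 * r ^ 2) ∧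
      pdy ρ x = 2 * (x.2 - Q.2) / (4 * r ^ 2) := by
    intro x
    have h1 := ((hasFDerivAt_fst (𝕜 := ℝ) (p := x)).sub_const Q.1).pow 2
    have h2 := ((hasFDerivAt_snd (𝕜 := ℝ) (p := x)).sub_const Q.2).pow 2
    have h : HasFDerivAt ρ _ x := (h1.add h2).mul_const (4 * r ^ 2)⁻¹
    simp only [pdx, pdy]
    rw [h.fderiv]
    constructor <;> simp <;> ring
  have hInt := integral_div_test hu hφ hφc
  have hAo : IsOpen A := isOpen_distSq_lt hu Q _
  have hAB : A ⊆ B := fun x hx =>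
    Metric.closedBall_subset_closedBall (by linarith)
      (Metric.ball_subset_closedBall (norm_lt_of_distSq_lt hr hx))
  have hWi : IntegrableOn (Wgraph u) A := integrableOn_of_subset_ball (continuous_Wgraph hu) hAB
  have hlow : ∫ x, (A.indicator (fun x => 9 / 32 * Wgraph u x) x - B.indicator (fun _ => 17) x)
      ≤ ∫ x, ((pdx (Y₁ u) x + pdy (Y₂ u) x) * φ x
        + (Y₁ u x * pdx φ x + Y₂ u x * pdy φ x)) := by
    refine integral_mono ?_ ?_ ?_
    · refine Integrable.sub ?_ ?_
      · exact IntegrableOn.integrable_indicator (hWi.const_mul (9 / 32)) hAo.measurableSet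
      · refine IntegrableOn.integrable_indicator ?_ Metric.isClosed_closedBall.measurableSet
        exact integrableOn_const (isCompact_closedBall _ _).measure_lt_top.ne
    · have k1 := continuous_pdx (contDiff_Y₁ hu)
      have k2 := continuous_pdy (contDiff_Y₂ hu)
      have k3 := (contDiff_Y₁ hu).continuous
      have k4 := (contDiff_Y₂ hu).continuous
      have k5 := hφ.continuous
      have k6 := continuous_pdx hφ
      have k7 := continuous_pdy hφ
      refine Continuous.integrable_of_hasCompactSupport (by fun_prop) ?_
      exact HasCompactSupport.add hφc.mul_left ((hasCompactSupport_pdx hφc).mul_left.add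
        (hasCompactSupport_pdy hφc).mul_left)
    · intro x
      simp only
      have ex : pdx φ x = (1 / (1 + ((u x - u Q) / r) ^ 2)) * pdx u x * cut (ρ x)
          + c (u x) * (-(2 * max (1 - ρ x) 0) * pdx ρ x) := by
        rw [pdx_mul hcu hcρ, pdx_comp hu1 x (hdc _), pdx_comp hρ x (hasDerivAt_cut _)]
      have ey : pdy φ x = (1 / (1 + ((u x - u Q) / r) ^ 2)) * pdy u x * cut (ρ x)
          + c (u x) * (-(2 * max (1 - ρ x) 0) * pdy ρ x) := by
        rw [pdy_mul hcu hcρ, pdy_comp hu1 x (hdc _), pdy_comp hρ x (hasDerivAt_cut _)]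
      by_cases hx : x ∈ B
      · rw [indicator_of_mem hx]
        have hxb : x ∈ Metric.ball Q (5 * R) := by
          rw [Metric.mem_ball]
          have h1 : dist x Q ≤ 2 * r := hx
          linarith
        rw [heq x hxb, ex, ey]
        have hpy : pdx u x * Y₁ u x + pdy u x * Y₂ u x = Wgraph u x - 1 / Wgraph u x := by
          have h1 := (Wgraph_pos u x).ne'
          have h2 := Wgraph_sq u x
          rw [Y₁, Y₂]; field_simp; linarith
        have hρ0 : 0 ≤ ρ x := by positivity
        have hm0 : 0 ≤ max (1 - ρ x) 0 := le_max_right _ _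
        have hm1 : max (1 - ρ x) 0 ≤ 1 := max_le (by linarith) zero_le_one
        have hcx : ∀ d : ℝ, |d| ≤ 2 * r →
            |-(2 * max (1 - ρ x) 0) * (2 * d / (4 * r ^ 2))| ≤ 2 / r := by
          intro d hd
          rw [abs_mul, abs_neg, abs_of_nonneg (by positivity : 0 ≤ 2 * max (1 - ρ x) 0), abs_div,
            abs_mul, abs_two, abs_of_pos (by positivity : 0 < 4 * r ^ 2)]
          have : 2 * |d| / (4 * r ^ 2) ≤ 1 / r := by
            rw [div_le_div_iff₀ (by positivity) hr]; nlinarith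
          calc 2 * max (1 - ρ x) 0 * (2 * |d| / (4 * r ^ 2)) ≤ 2 * 1 * (1 / r) := by gcongr
            _ = 2 / r := by ring
        have hd : |x.1 - Q.1| ≤ 2 * r ∧ |x.2 - Q.2| ≤ 2 * r := by
          have : dist x Q ≤ 2 * r := hx
          rwa [Prod.dist_eq, max_le_iff, Real.dist_eq, Real.dist_eq] at this
        have hT : |c (u x)| ≤ 2 * r := by
          simp only [c]
          rw [abs_mul, abs_of_pos hr]
          have h1 := arctan_lt_pi_div_two ((u x - u Q) / r)
          have h2 := neg_pi_div_two_lt_arctan ((u x - u Q) / r)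
          have h3 := pi_le_four
          have : |arctan ((u x - u Q) / r)| ≤ 2 := abs_le.2 ⟨by linarith, by linarith⟩
          nlinarith
        have main := fun k hk1 hk2 => area_pointwise (p := pdx u x) (q := pdy u x) (W := Wgraph u x)
          (T := c (u x)) (T' := 1 / (1 + ((u x - u Q) / r) ^ 2)) (χ := cut (ρ x)) hr hH
          (by nlinarith) (one_le_Wgraph u x) (abs_Y_le u x).1 (abs_Y_le u x).2 hpy hT
          (sq_nonneg _) (pow_le_one₀ hm0 hm1) ((hρd x).1 ▸ hcx _ hd.1) ((hρd x).2 ▸ hcx _ hd.2) k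
          hk1 hk2
        by_cases hxA : x ∈ A
        · rw [indicator_of_mem hxA]
          refine main (9 / 32) (by norm_num) ?_
          have hF : (x.1 - Q.1) ^ 2 + (x.2 - Q.2) ^ 2 + (u x - u Q) ^ 2 < r ^ 2 := hxA
          have t1 : (1 : ℝ) / 2 ≤ 1 / (1 + ((u x - u Q) / r) ^ 2) := by
            apply one_div_le_one_div_of_le (by positivity)
            rw [div_pow]
            have : (u x - u Q) ^ 2 / r ^ 2 ≤ 1 := by
              rw [div_le_one (by positivity)]; nlinarith [sq_nonneg (x.1 - Q.1), sq_nonneg (x.2 - Q.2)]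
            linarith
          have t2 : ρ x ≤ 1 / 4 := by
            simp only [ρ]
            rw [div_le_div_iff₀ (by positivity) (by norm_num)]
            nlinarith [sq_nonneg (u x - u Q)]
          have t3 : (9 : ℝ) / 16 ≤ cut (ρ x) := by
            have : 3 / 4 ≤ max (1 - ρ x) 0 := le_max_of_le_left (by linarith)
            rw [cut]; nlinarith
          calc (9 : ℝ) / 32 = 1 / 2 * (9 / 16) := by norm_num
            _ ≤ _ := by gcongr
        · rw [indicator_of_notMem hxA]
          have := main 0 zero_le_one (mul_nonneg (by positivity) (sq_nonneg _))
          linarith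
      · have h1 := hρB x hx
        have hm : max (1 - ρ x) 0 = 0 := max_eq_right (by linarith)
        rw [ex, ey, hφ0 x hx, indicator_of_notMem hx, indicator_of_notMem (fun h => hx (hAB h))]
        simp [cut, hm]
  rw [hInt, integral_sub, integral_indicator hAo.measurableSet,
    integral_indicator Metric.isClosed_closedBall.measurableSet, integral_const_mul,
    setIntegral_const, volume_closedBall_prod Q (by positivity)] at hlow
  · rw [smul_eq_mul] at hlow
    nlinarith
  · exact IntegrableOn.integrable_indicator (hWi.const_mul (9 / 32)) hAo.measurableSet
  · refine IntegrableOn.integrable_indicator ?_ Metric.isClosed_closedBall.measurableSet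
    exact integrableOn_const (isCompact_closedBall _ _).measure_lt_top.ne

end area

/-! ### Total curvature bound -/

section energy

variable {u : ℝ × ℝ → ℝ} {Q : ℝ × ℝ} {H R : ℝ}

/-- The factor `W / (W + 1)`, so that `Yᵢ W / (W + 1)` are the components of `∇u / (W + 1)`, which
are bounded by `1`; see `jacobian_sum`. -/
def kfac (u : ℝ × ℝ → ℝ) (x : ℝ × ℝ) : ℝ := Wgraph u x / (Wgraph u x + 1)

lemma contDiff_kfac (hu : ContDiff ℝ 2 u) : ContDiff ℝ 1 (kfac u) :=
  (contDiff_Wgraph hu).div ((contDiff_Wgraph hu).add contDiff_const)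
    fun x => (add_pos (Wgraph_pos u x) one_pos).ne'

lemma pd_kfac (hu : ContDiff ℝ 2 u) (x : ℝ × ℝ) :
    pdx (kfac u) x = kfac u x ^ 2 * (pdx u x * pdx (Y₁ u) x + pdy u x * pdx (Y₂ u) x) ∧
    pdy (kfac u) x = kfac u x ^ 2 * (pdx u x * pdy (Y₁ u) x + pdy u x * pdy (Y₂ u) x) := by
  have hW := Wgraph_pos u x
  have hd : HasDerivAt (fun t : ℝ => t / (t + 1)) (1 / (Wgraph u x + 1) ^ 2) (Wgraph u x) := by
    have := (hasDerivAt_id (Wgraph u x)).div ((hasDerivAt_id (Wgraph u x)).add_const 1)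
      (by simp only [id]; positivity)
    refine this.congr_deriv ?_
    simp
  obtain ⟨g1, g2⟩ := grad_Wgraph hu x
  have h1 := pdx_comp (contDiff_Wgraph hu) x hd
  have h2 := pdy_comp (contDiff_Wgraph hu) x hd
  refine ⟨h1.trans ?_, h2.trans ?_⟩
  · rw [g1, kfac]; field_simp
  · rw [g2, kfac]; field_simp

/-- The curvature form `W det B` (`B` the shape operator) is the exact form
`dV₁ ∧ dY₂ + dY₁ ∧ dV₂` with the bounded primitives `Vᵢ = Yᵢ W / (W + 1)`. -/
lemma jacobian_sum (hu : ContDiff ℝ 2 u) (x : ℝ × ℝ) :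
    (pdx (fun z => Y₁ u z * kfac u z) x * pdy (Y₂ u) x
      - pdy (fun z => Y₁ u z * kfac u z) x * pdx (Y₂ u) x) +
    (pdx (Y₁ u) x * pdy (fun z => Y₂ u z * kfac u z) x
      - pdy (Y₁ u) x * pdx (fun z => Y₂ u z * kfac u z) x) =
    Wgraph u x * (pdx (Y₁ u) x * pdy (Y₂ u) x - pdy (Y₁ u) x * pdx (Y₂ u) x) := by
  have h1 := contDiff_Y₁ hu
  have h2 := contDiff_Y₂ hu
  have hk := contDiff_kfac hu
  obtain ⟨k1, k2⟩ := pd_kfac hu x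
  rw [pdx_mul h1 hk, pdy_mul h1 hk, pdx_mul h2 hk, pdy_mul h2 hk, k1, k2]
  have hW := Wgraph_pos u x
  have hpy : kfac u x * (2 + kfac u x * (pdx u x * Y₁ u x + pdy u x * Y₂ u x)) = Wgraph u x := by
    have hsq := Wgraph_sq u x
    have : pdx u x * Y₁ u x + pdy u x * Y₂ u x = (Wgraph u x ^ 2 - 1) / Wgraph u x := by
      rw [Y₁, Y₂]; field_simp; linarith
    rw [this, kfac]; field_simp; ring
  linear_combination (pdx (Y₁ u) x * pdy (Y₂ u) x - pdy (Y₁ u) x * pdx (Y₂ u) x) * hpy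

/-- Pointwise form of the total curvature bound: `S` is `|A|²`, `d` is the Gauss curvature, `s ^ 2`
is the cutoff, and `J₁`, `J₂` are the Jacobians of the squared distance against `Y₁`, `Y₂`. -/
lemma energy_pointwise {W S s d J₁ J₂ V₁ V₂ : ℝ} (hR : 0 < R) (hH : 0 < H) (hHR : H * R ≤ 1)
    (hW : 0 ≤ W) (hS : 0 ≤ S) (hs0 : 0 ≤ s) (hs1 : s ≤ 1) (hd : 2 * d = 4 * H ^ 2 - S)
    (hV₁ : |V₁| ≤ 1) (hV₂ : |V₂| ≤ 1) (hJ₁ : |J₁| ≤ 12 * R * (W * √S))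
    (hJ₂ : |J₂| ≤ 12 * R * (W * √S)) (c : ℝ) (hc : c ≤ s ^ 2 / 4) :
    c * (W * S) - 146 / R ^ 2 * W
      ≤ -(s ^ 2 * (W * d) + (V₁ * (-s / (2 * R ^ 2) * J₂) - V₂ * (-s / (2 * R ^ 2) * J₁))) := by
  have hk : ∀ V J : ℝ, |V| ≤ 1 → |J| ≤ 12 * R * (W * √S) →
      |V * (-s / (2 * R ^ 2) * J)| ≤ 6 * s * W * √S / R := by
    intro V J hV hJ
    rw [abs_mul, abs_mul, abs_div, abs_neg, abs_of_nonneg hs0,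
      abs_of_pos (by positivity : 0 < 2 * R ^ 2)]
    calc |V| * (s / (2 * R ^ 2) * |J|) ≤ 1 * (s / (2 * R ^ 2) * (12 * R * (W * √S))) := by
          gcongr
      _ = 6 * s * W * √S / R := by field_simp; ring
  have k1 := abs_le.1 (hk V₁ J₂ hV₁ hJ₂)
  have k2 := abs_le.1 (hk V₂ J₁ hV₂ hJ₁)
  have hsq : √S ^ 2 = S := Real.sq_sqrt hS
  have h1 : 12 * s * √S / R ≤ s ^ 2 * S / 4 + 144 / R ^ 2 := by
    have := sq_nonneg (s * √S / 2 - 12 / R)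
    have e : (s * √S / 2 - 12 / R) ^ 2 = s ^ 2 * √S ^ 2 / 4 + 144 / R ^ 2 - 12 * s * √S / R := by
      field_simp; ring
    rw [e, hsq] at this; linarith
  have h2 : 2 * H ^ 2 * s ^ 2 ≤ 2 / R ^ 2 := by
    rw [le_div_iff₀ (by positivity)]
    have : (H * R * s) ^ 2 ≤ 1 := pow_le_one₀ (by positivity) (mul_le_one₀ hHR hs0 hs1)
    nlinarith
  have h3 := mul_le_mul_of_nonneg_left h1 hW
  have h4 := mul_le_mul_of_nonneg_left h2 hW
  have h5 := mul_le_mul_of_nonneg_left hc (mul_nonneg hW hS)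
  have e1 : W * (12 * s * √S / R) = 6 * s * W * √S / R + 6 * s * W * √S / R := by ring
  have e2 : s ^ 2 * (W * d) = s ^ 2 * W * (4 * H ^ 2 - S) / 2 := by rw [← hd]; ring
  have e3 : 146 / R ^ 2 * W = W * (144 / R ^ 2) + W * (2 / R ^ 2) := by ring
  rw [e2, e3]
  nlinarith

/-- The integral of `|A|²` over an extrinsic ball is bounded by an absolute constant. Since
`|A|² = 4H² - 2K`, it suffices to bound the integral of the Gauss curvature `K` against a cutoff;
`K` times the area element is exact with bounded primitives by `jacobian_sum`, and Young's
inequality together with `area_bound` absorbs the terms with derivatives of the cutoff. -/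
lemma energy_bound (hu : ContDiff ℝ 2 u) (huc : HasCompactSupport u) (hH : 0 < H) (hR : 0 < R)
    (hHR : H * R ≤ 1)
    (heq : ∀ x ∈ Metric.ball Q (5 * R), pdx (Y₁ u) x + pdy (Y₂ u) x = 2 * H) :
    ∫ x in {x | distSq u Q x < R ^ 2}, Wgraph u x * sffSq u x ≤ 5000000 := by
  have h1 := contDiff_Y₁ hu
  have h2 := contDiff_Y₂ hu
  have hk := contDiff_kfac hu
  have hF := contDiff_distSq hu Q
  have harea := area_bound (r := 2 * R) hu hH hHR heq (by positivity) le_rfl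
  set A : Set (ℝ × ℝ) := {x | distSq u Q x < R ^ 2}
  set B : Set (ℝ × ℝ) := {x | distSq u Q x < (2 * R) ^ 2}
  have hAo : IsOpen A := isOpen_distSq_lt hu Q _
  have hBo : IsOpen B := isOpen_distSq_lt hu Q _
  have hBb : B ⊆ Metric.closedBall Q (2 * R) := fun x hx =>
    Metric.ball_subset_closedBall (norm_lt_of_distSq_lt (by positivity) hx)
  have hAB : A ⊆ B := fun x hx => lt_of_lt_of_le (show distSq u Q x < R ^ 2 from hx) (by nlinarith)
  let ρ : ℝ × ℝ → ℝ := fun x => distSq u Q x / (4 * R ^ 2)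
  let η : ℝ × ℝ → ℝ := fun x => cut (ρ x)
  have hρ : ContDiff ℝ 1 ρ := hF.div_const _
  have hη : ContDiff ℝ 1 η := contDiff_cut.comp hρ
  have hs0 : ∀ x, x ∉ B → max (1 - ρ x) 0 = 0 := by
    intro x hx
    have h : (2 * R) ^ 2 ≤ distSq u Q x := not_lt.1 hx
    have : 1 ≤ ρ x := by
      simp only [ρ]; rw [le_div_iff₀ (by positivity)]; linarith
    exact max_eq_right (by linarith)
  have hηc : HasCompactSupport η := by
    refine HasCompactSupport.intro (isCompact_closedBall Q (2 * R)) fun x hx => ?_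
    have := hs0 x fun h => hx (hBb h)
    simp [η, cut, this]
  have hηd : ∀ x, pdx η x = -(max (1 - ρ x) 0) / (2 * R ^ 2) * pdx (distSq u Q) x ∧
      pdy η x = -(max (1 - ρ x) 0) / (2 * R ^ 2) * pdy (distSq u Q) x := by
    intro x
    have hd : HasDerivAt (fun t => cut (t / (4 * R ^ 2)))
        (-(max (1 - ρ x) 0) / (2 * R ^ 2)) (distSq u Q x) := by
      have a := (hasDerivAt_cut (ρ x)).comp (distSq u Q x)
        ((hasDerivAt_id (distSq u Q x)).div_const (4 * R ^ 2))
      refine a.congr_deriv ?_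
      field_simp; ring
    exact ⟨pdx_comp hF x hd, pdy_comp hF x hd⟩
  let V₁ : ℝ × ℝ → ℝ := fun z => Y₁ u z * kfac u z
  let V₂ : ℝ × ℝ → ℝ := fun z => Y₂ u z * kfac u z
  have hV₁ : ContDiff ℝ 1 V₁ := h1.mul hk
  have hV₂ : ContDiff ℝ 1 V₂ := h2.mul hk
  have m1 : ContDiff ℝ 1 fun z => η z * V₁ z := hη.mul hV₁
  have m2 : ContDiff ℝ 1 fun z => η z * V₂ z := hη.mul hV₂
  have mc1 : HasCompactSupport fun z => η z * V₁ z := hηc.mul_right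
  have mc2 : HasCompactSupport fun z => η z * V₂ z := hηc.mul_right
  have I1 := integral_jacobian_eq_zero m1 mc1 h2 (hasCompactSupport_Y₂ huc)
  have I2 := integral_jacobian_eq_zero h1 (hasCompactSupport_Y₁ huc) m2 mc2
  have c1 := continuous_pdx h1
  have c2 := continuous_pdy h1
  have c3 := continuous_pdx h2
  have c4 := continuous_pdy h2
  have c5 := continuous_pdx m1
  have c6 := continuous_pdy m1
  have c7 := continuous_pdx m2
  have c8 := continuous_pdy m2
  have i1 : Integrable fun x => pdx (fun z => η z * V₁ z) x * pdy (Y₂ u) x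
      - pdy (fun z => η z * V₁ z) x * pdx (Y₂ u) x :=
    Continuous.integrable_of_hasCompactSupport (by fun_prop)
      ((hasCompactSupport_pdx mc1).mul_right.sub (hasCompactSupport_pdy mc1).mul_right)
  have i2 : Integrable fun x => pdx (Y₁ u) x * pdy (fun z => η z * V₂ z) x
      - pdy (Y₁ u) x * pdx (fun z => η z * V₂ z) x :=
    Continuous.integrable_of_hasCompactSupport (by fun_prop)
      ((hasCompactSupport_pdy mc2).mul_left.sub (hasCompactSupport_pdx mc2).mul_left)
  have hWc := continuous_Wgraph hu
  have hSc := continuous_sffSq hu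
  have iA : IntegrableOn (fun x => 9 / 64 * (Wgraph u x * sffSq u x)) A :=
    integrableOn_of_subset_ball (by fun_prop) (hAB.trans hBb)
  have iB : IntegrableOn (fun x => 146 / R ^ 2 * Wgraph u x) B :=
    integrableOn_of_subset_ball (by fun_prop) hBb
  have iA' := iA.integrable_indicator hAo.measurableSet
  have iB' := iB.integrable_indicator hBo.measurableSet
  have key : ∫ x, (A.indicator (fun x => 9 / 64 * (Wgraph u x * sffSq u x)) x
        - B.indicator (fun x => 146 / R ^ 2 * Wgraph u x) x)
      ≤ ∫ x, -((pdx (fun z => η z * V₁ z) x * pdy (Y₂ u) x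
        - pdy (fun z => η z * V₁ z) x * pdx (Y₂ u) x) +
        (pdx (Y₁ u) x * pdy (fun z => η z * V₂ z) x
        - pdy (Y₁ u) x * pdx (fun z => η z * V₂ z) x)) := by
    refine integral_mono (iA'.sub iB') (i1.add i2).neg fun x => ?_
    simp only
    have js := jacobian_sum hu x
    obtain ⟨d1, d2⟩ := hηd x
    have e : (pdx (fun z => η z * V₁ z) x * pdy (Y₂ u) x
        - pdy (fun z => η z * V₁ z) x * pdx (Y₂ u) x) +
        (pdx (Y₁ u) x * pdy (fun z => η z * V₂ z) x
        - pdy (Y₁ u) x * pdx (fun z => η z * V₂ z) x) =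
        (max (1 - ρ x) 0) ^ 2 * (Wgraph u x *
          (pdx (Y₁ u) x * pdy (Y₂ u) x - pdy (Y₁ u) x * pdx (Y₂ u) x)) +
        (V₁ x * (-(max (1 - ρ x) 0) / (2 * R ^ 2) *
          (pdx (distSq u Q) x * pdy (Y₂ u) x - pdy (distSq u Q) x * pdx (Y₂ u) x))
        - V₂ x * (-(max (1 - ρ x) 0) / (2 * R ^ 2) *
          (pdx (distSq u Q) x * pdy (Y₁ u) x - pdy (distSq u Q) x * pdx (Y₁ u) x))) := by
      have hηx : η x = (max (1 - ρ x) 0) ^ 2 := rfl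
      rw [pdx_mul hη hV₁, pdy_mul hη hV₁, pdx_mul hη hV₂, pdy_mul hη hV₂, d1, d2, hηx, ← js]
      ring
    rw [e]
    by_cases hx : x ∈ B
    · rw [indicator_of_mem hx]
      have hxF : distSq u Q x < (2 * R) ^ 2 := hx
      have hxb : x ∈ Metric.ball Q (5 * R) :=
        Metric.ball_subset_ball (by linarith) (norm_lt_of_distSq_lt (by positivity) hxF)
      have hρ0 : 0 ≤ ρ x := by simp only [ρ, distSq]; positivity
      have hm0 : 0 ≤ max (1 - ρ x) 0 := le_max_right _ _
      have hm1 : max (1 - ρ x) 0 ≤ 1 := max_le (by linarith) zero_le_one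
      have hdet : 2 * (pdx (Y₁ u) x * pdy (Y₂ u) x - pdy (Y₁ u) x * pdx (Y₂ u) x)
          = 4 * H ^ 2 - sffSq u x := by
        have := heq x hxb
        rw [sffSq]
        linear_combination (pdx (Y₁ u) x + pdy (Y₂ u) x + 2 * H) * this
      have hV : ∀ y : ℝ, |y| ≤ 1 → |y * kfac u x| ≤ 1 := by
        intro y hy
        have hW := Wgraph_pos u x
        rw [abs_mul, abs_of_nonneg (by rw [kfac]; positivity : 0 ≤ kfac u x)]
        refine mul_le_one₀ hy (by rw [kfac]; positivity) ?_
        rw [kfac, div_le_one (by positivity)]; linarith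
      obtain ⟨j1, j2⟩ := jac_distSq_le hu (by positivity : (0:ℝ) ≤ 2 * R) hxF.le
      rw [show 6 * (2 * R) = 12 * R by ring] at j1 j2
      have main := fun c hc => energy_pointwise hR hH hHR (Wgraph_pos u x).le (sffSq_nonneg hu x)
        hm0 hm1 hdet (hV _ (abs_Y_le u x).1) (hV _ (abs_Y_le u x).2) j1 j2 c hc
      by_cases hxA : x ∈ A
      · rw [indicator_of_mem hxA]
        refine main (9 / 64) ?_
        have hF : distSq u Q x < R ^ 2 := hxA
        have t2 : ρ x ≤ 1 / 4 := by
          simp only [ρ]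
          rw [div_le_div_iff₀ (by positivity) (by norm_num)]
          nlinarith
        have : 3 / 4 ≤ max (1 - ρ x) 0 := le_max_of_le_left (by linarith)
        nlinarith
      · rw [indicator_of_notMem hxA]
        have := main 0 (by positivity)
        linarith
    · rw [indicator_of_notMem hx, indicator_of_notMem (fun h => hx (hAB h)), hs0 x hx]
      simp
  rw [integral_neg, integral_add i1 i2, I1, I2, integral_sub iA' iB',
    integral_indicator hAo.measurableSet, integral_indicator hBo.measurableSet,
    integral_const_mul, integral_const_mul] at key
  have h3 : 146 / R ^ 2 * ∫ x in B, Wgraph u x ≤ 146 / R ^ 2 * (1000 * (2 * R) ^ 2) := by gcongr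
  have h4 : 146 / R ^ 2 * (1000 * (2 * R) ^ 2) = 584000 := by field_simp; norm_num
  linarith

end energy

/-! ### A level curve with small oscillation of the normal -/

section level

variable {u : ℝ × ℝ → ℝ} {Q : ℝ × ℝ} {H R : ℝ}

lemma det_fderiv_prodMk (f g : ℝ × ℝ → ℝ) (x : ℝ × ℝ) :
    ((fderiv ℝ f x).prod (fderiv ℝ g x)).det = pdx f x * pdy g x - pdy f x * pdx g x := by
  rw [ContinuousLinearMap.det, ← LinearMap.det_toMatrix (Module.Basis.finTwoProd ℝ),
    Matrix.det_fin_two]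
  simp [LinearMap.toMatrix_apply, pdx, pdy]

/-- By Fubini and the area formula inequality, only few level sets of `f` have a large image
under `g`. -/
lemma mul_volume_bad_le {f g : ℝ × ℝ → ℝ} (hf : ContDiff ℝ 1 f) (hg : ContDiff ℝ 1 g)
    {K : Set (ℝ × ℝ)} (hK : IsCompact K) (ε : ENNReal) :
    ε * volume {s : ℝ | ε ≤ volume (Prod.mk s ⁻¹' ((fun x => (f x, g x)) '' K))}
      ≤ ∫⁻ x in K, ENNReal.ofReal |pdx f x * pdy g x - pdy f x * pdx g x| := by
  have hΦ : Continuous fun x => (f x, g x) := hf.continuous.prodMk hg.continuous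
  have hm : MeasurableSet ((fun x => (f x, g x)) '' K) := (hK.image hΦ).measurableSet
  calc ε * volume {s : ℝ | ε ≤ volume (Prod.mk s ⁻¹' ((fun x => (f x, g x)) '' K))}
      ≤ ∫⁻ s, volume (Prod.mk s ⁻¹' ((fun x => (f x, g x)) '' K)) :=
        mul_meas_ge_le_lintegral (measurable_measure_prodMk_left hm) ε
    _ = volume ((fun x => (f x, g x)) '' K) := by
        rw [Measure.volume_eq_prod, Measure.prod_apply hm]
    _ ≤ ∫⁻ x in K, ENNReal.ofReal |((fderiv ℝ f x).prod (fderiv ℝ g x)).det| := by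
        refine addHaar_image_le_lintegral_abs_det_fderiv volume hK.measurableSet
          (f' := fun x => (fderiv ℝ f x).prod (fderiv ℝ g x)) fun x _ => ?_
        exact (((hf.differentiable one_ne_zero) x).hasFDerivAt.prodMk
          ((hg.differentiable one_ne_zero) x).hasFDerivAt).hasFDerivWithinAt
    _ = _ := by simp_rw [det_fderiv_prodMk]

/-- Pigeonhole over dyadic annuli. -/
lemma exists_annulus {F g : ℝ × ℝ → ℝ} (hF : Continuous F) (hR : 0 < R) {C : ℝ}
    (hg : IntegrableOn g {x | F x < R ^ 2}) (hg0 : ∀ x, 0 ≤ g x)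
    (hC : ∫ x in {x | F x < R ^ 2}, g x ≤ C) {n : ℕ} (hn : 0 < n) :
    ∃ r, 0 < r ∧ 2 * r ≤ R ∧ R / 2 ^ n ≤ r ∧
      ∫ x in {x | r ^ 2 ≤ F x ∧ F x < (2 * r) ^ 2}, g x ≤ C / n := by
  let r : ℕ → ℝ := fun k => R / 2 ^ (k + 1)
  let A : ℕ → Set (ℝ × ℝ) := fun k => {x | r k ^ 2 ≤ F x ∧ F x < (2 * r k) ^ 2}
  have hr : ∀ k, 0 < r k := fun k => by positivity
  have hrR : ∀ k, 2 * r k ≤ R := fun k => by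
    have : (1:ℝ) ≤ 2 ^ k := one_le_pow₀ (by norm_num)
    simp only [r]
    rw [← mul_div_assoc, div_le_iff₀ (by positivity), pow_succ]
    nlinarith
  have hrr : ∀ j k, j < k → 2 * r k ≤ r j := fun j k hjk => by
    simp only [r]
    have : (2:ℝ) ^ (j + 1) ≤ 2 ^ k := pow_le_pow_right₀ (by norm_num) hjk
    have e : 2 * (R / 2 ^ (k + 1)) = R / 2 ^ k := by rw [pow_succ]; field_simp
    rw [e]
    gcongr
  have hAm : ∀ k, MeasurableSet (A k) := fun k =>
    (isClosed_le continuous_const hF).measurableSet.inter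
      (isOpen_lt hF continuous_const).measurableSet
  have hAR : ∀ k, A k ⊆ {x | F x < R ^ 2} := fun k x hx =>
    lt_of_lt_of_le hx.2 (pow_le_pow_left₀ (by have := hr k; positivity) (hrR k) 2)
  have hdis' : ∀ j k, j < k → Disjoint (A j) (A k) := by
    intro j k hjk
    rw [Set.disjoint_left]
    intro x h1 h2
    have := pow_le_pow_left₀ (by have := hr k; positivity) (hrr j k hjk) 2
    linarith [h1.1, h2.2]
  have hsum : ∑ k ∈ Finset.range n, ∫ x in A k, g x ≤ C := by
    rw [← integral_biUnion_finset _ (fun k _ => hAm k) ?_ fun k _ => hg.mono_set (hAR k)]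
    · refine le_trans (setIntegral_mono_set hg (Eventually.of_forall hg0) ?_) hC
      refine LE.le.eventuallyLE ?_
      exact iUnion₂_subset fun k _ => hAR k
    · intro j _ k _ hjk
      rcases lt_or_gt_of_ne hjk with h | h
      · exact hdis' j k h
      · exact (hdis' k j h).symm
  have : ∑ k ∈ Finset.range n, ∫ x in A k, g x ≤ ∑ k ∈ Finset.range n, C / n := by
    rw [Finset.sum_const, Finset.card_range, nsmul_eq_mul, mul_div_cancel₀]
    · exact hsum
    · exact_mod_cast hn.ne'
  obtain ⟨k, hk, hkC⟩ := Finset.exists_le_of_sum_le (Finset.nonempty_range_iff.2 hn.ne') this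
  refine ⟨r k, hr k, hrR k, ?_, hkC⟩
  simp only [r]
  gcongr
  · norm_num
  · exact Finset.mem_range.1 hk

/-- The logarithmic length-area argument: among dyadic annuli one carries little curvature, and most
level curves of the distance in that annulus have a small image under both `Y₁` and `Y₂`. -/
lemma exists_good_level {ε : ℝ} (hε : 0 < ε) : ∃ n : ℕ, ∀ (u : ℝ × ℝ → ℝ) (Q : ℝ × ℝ) (H R : ℝ),
    ContDiff ℝ 2 u → HasCompactSupport u → 0 < H → 0 < R → H * R ≤ 1 →
    (∀ x ∈ Metric.ball Q (5 * R), pdx (Y₁ u) x + pdy (Y₂ u) x = 2 * H) →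
    ∃ s, (R / 2 ^ n) ^ 2 ≤ s ∧ s < R ^ 2 ∧
      volume (Y₁ u '' {x | distSq u Q x = s}) < ENNReal.ofReal ε ∧
      volume (Y₂ u '' {x | distSq u Q x = s}) < ENNReal.ofReal ε := by
  set t : ℝ := 40000000 / ε with ht
  have htp : 0 < t := by positivity
  refine ⟨⌈t ^ 2⌉₊, fun u Q H R hu huc hH hR hHR heq => ?_⟩
  set n := ⌈t ^ 2⌉₊
  have hn : 0 < n := Nat.ceil_pos.2 (by positivity)
  have hnt : t ^ 2 ≤ n := Nat.le_ceil _
  have hWc := continuous_Wgraph hu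
  have hSc := continuous_sffSq hu
  have hF := contDiff_distSq hu Q
  have hb : ∀ r : ℝ, 0 < r → {x | distSq u Q x < r ^ 2} ⊆ Metric.closedBall Q r := fun r hr x hx =>
    Metric.ball_subset_closedBall (norm_lt_of_distSq_lt hr hx)
  obtain ⟨r, hr, hrR, hrn, hen⟩ := exists_annulus (F := distSq u Q) hF.continuous hR
    (integrableOn_of_subset_ball (f := fun x => Wgraph u x * sffSq u x) (by fun_prop) (hb R hR))
    (fun x => mul_nonneg (Wgraph_pos u x).le (sffSq_nonneg hu x))
    (energy_bound hu huc hH hR hHR heq) hn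
  have har := area_bound (r := 2 * r) hu hH hHR heq (by positivity) (by linarith)
  set K : Set (ℝ × ℝ) := {x | r ^ 2 ≤ distSq u Q x ∧ distSq u Q x ≤ 3 * r ^ 2}
  have hr2 : 0 < r ^ 2 := by positivity
  have hKlt : ∀ x ∈ K, distSq u Q x < (2 * r) ^ 2 := fun x hx => by nlinarith [hx.2]
  have hKb : K ⊆ Metric.closedBall Q (2 * r) := fun x hx => hb _ (by positivity) (hKlt x hx)
  have hK : IsCompact K := (isCompact_closedBall Q (2 * r)).of_isClosed_subset
    ((isClosed_le continuous_const hF.continuous).inter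
      (isClosed_le hF.continuous continuous_const)) hKb
  have e1 : ∫ x in K, Wgraph u x * sffSq u x ≤ 5000000 / t ^ 2 := by
    refine le_trans (setIntegral_mono_set (integrableOn_of_subset_ball (by fun_prop)
      (fun x hx => hb (2 * r) (by positivity) hx.2)) (Eventually.of_forall fun x =>
      mul_nonneg (Wgraph_pos u x).le (sffSq_nonneg hu x)) ?_) (hen.trans ?_)
    · exact LE.le.eventuallyLE fun x hx => ⟨hx.1, hKlt x hx⟩
    · gcongr
  have e2 : ∫ x in K, Wgraph u x ≤ 4000 * r ^ 2 := by
    refine le_trans (setIntegral_mono_set (integrableOn_of_subset_ball (by fun_prop)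
      (hb (2 * r) (by positivity))) (Eventually.of_forall fun x => (Wgraph_pos u x).le)
      (LE.le.eventuallyLE fun x hx => hKlt x hx)) (har.trans (le_of_eq (by ring)))
  have i1 : IntegrableOn (fun x => Wgraph u x * sffSq u x) K :=
    integrableOn_of_subset_ball (by fun_prop) hKb
  have i2 : IntegrableOn (Wgraph u) K := integrableOn_of_subset_ball (by fun_prop) hKb
  -- Young's inequality `2 r √S ≤ 1 / t + r² t S` balances the area `O(r²)` and the energy
  -- `O(1 / t²)`.
  have hlin : ∀ J : ℝ × ℝ → ℝ, (∀ x ∈ K, |J x| ≤ 6 * (2 * r) * (Wgraph u x * √(sffSq u x))) →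
      ∫⁻ x in K, ENNReal.ofReal |J x| ≤ ENNReal.ofReal (36000000 * r ^ 2 / t) := by
    intro J hJ
    have hpt : ∀ x ∈ K, |J x| ≤ 6 / t * Wgraph u x + 6 * r ^ 2 * t * (Wgraph u x * sffSq u x) := by
      intro x hx
      refine (hJ x hx).trans ?_
      have hsq : √(sffSq u x) ^ 2 = sffSq u x := Real.sq_sqrt (sffSq_nonneg hu x)
      have h0 := mul_nonneg (by positivity : 0 ≤ 6 / t)
        (mul_nonneg (Wgraph_pos u x).le (sq_nonneg (1 - r * t * √(sffSq u x))))
      have e : 6 / t * (Wgraph u x * (1 - r * t * √(sffSq u x)) ^ 2)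
          = 6 / t * Wgraph u x + 6 * r ^ 2 * t * (Wgraph u x * √(sffSq u x) ^ 2)
            - 6 * (2 * r) * (Wgraph u x * √(sffSq u x)) := by field_simp; ring
      rw [e, hsq] at h0
      linarith
    have hi : IntegrableOn (fun x => 6 / t * Wgraph u x
        + 6 * r ^ 2 * t * (Wgraph u x * sffSq u x)) K :=
      integrableOn_of_subset_ball (by fun_prop) hKb
    calc ∫⁻ x in K, ENNReal.ofReal |J x|
        ≤ ∫⁻ x in K, ENNReal.ofReal (6 / t * Wgraph u x
          + 6 * r ^ 2 * t * (Wgraph u x * sffSq u x)) :=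
          setLIntegral_mono' hK.measurableSet fun x hx => ENNReal.ofReal_le_ofReal (hpt x hx)
      _ = ENNReal.ofReal (∫ x in K, (6 / t * Wgraph u x
          + 6 * r ^ 2 * t * (Wgraph u x * sffSq u x))) := by
          rw [ofReal_integral_eq_lintegral_ofReal hi]
          refine Eventually.of_forall fun x => ?_
          have h1 := Wgraph_pos u x
          have h2 := sffSq_nonneg hu x
          simp only [Pi.zero_apply]
          positivity
      _ ≤ _ := by
          refine ENNReal.ofReal_le_ofReal ?_
          rw [integral_add (Integrable.const_mul i2 _) (Integrable.const_mul i1 _),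
            integral_const_mul, integral_const_mul]
          calc _ ≤ 6 / t * (4000 * r ^ 2) + 6 * r ^ 2 * t * (5000000 / t ^ 2) := by gcongr
            _ ≤ 36000000 * r ^ 2 / t := by
              have : 6 / t * (4000 * r ^ 2) + 6 * r ^ 2 * t * (5000000 / t ^ 2)
                = 30024000 * r ^ 2 / t := by field_simp; ring
              rw [this]; gcongr; norm_num
  let bad : (ℝ × ℝ → ℝ) → Set ℝ := fun g =>
    {s : ℝ | ENNReal.ofReal ε ≤ volume (Prod.mk s ⁻¹' ((fun x => (distSq u Q x, g x)) '' K))}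
  have hbad : ∀ g, ContDiff ℝ 1 g → (∀ x ∈ K, |pdx (distSq u Q) x * pdy g x
      - pdy (distSq u Q) x * pdx g x| ≤ 6 * (2 * r) * (Wgraph u x * √(sffSq u x))) →
      volume (bad g) ≤ ENNReal.ofReal (9 / 10 * r ^ 2) := by
    intro g hg hJ
    have h := (mul_volume_bad_le hF hg hK (ENNReal.ofReal ε)).trans (hlin _ hJ)
    have e : 36000000 * r ^ 2 / t = ε * (9 / 10 * r ^ 2) := by
      rw [ht]; field_simp; norm_num
    rw [e, ENNReal.ofReal_mul hε.le] at h
    exact (ENNReal.mul_le_mul_iff_right (ENNReal.ofReal_pos.2 hε).ne' ENNReal.ofReal_ne_top).1 h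
  have hb1 := hbad _ (contDiff_Y₁ hu) fun x hx =>
    (jac_distSq_le hu (by positivity) (hKlt x hx).le).1
  have hb2 := hbad _ (contDiff_Y₂ hu) fun x hx =>
    (jac_distSq_le hu (by positivity) (hKlt x hx).le).2
  have hex : ∃ s ∈ Icc (r ^ 2) (3 * r ^ 2), s ∉ bad (Y₁ u) ∧ s ∉ bad (Y₂ u) := by
    by_contra hcon
    push Not at hcon
    have hsub : Icc (r ^ 2) (3 * r ^ 2) ⊆ bad (Y₁ u) ∪ bad (Y₂ u) := fun s hs => by
      by_cases h : s ∈ bad (Y₁ u)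
      · exact Or.inl h
      · exact Or.inr (hcon s hs h)
    have h1 := (measure_mono hsub).trans ((measure_union_le _ _).trans (add_le_add hb1 hb2))
    rw [Real.volume_Icc, ← ENNReal.ofReal_add (by positivity) (by positivity),
      ENNReal.ofReal_le_ofReal_iff (by positivity)] at h1
    linarith
  obtain ⟨s, hs, h1, h2⟩ := hex
  have himg : ∀ g : ℝ × ℝ → ℝ, s ∉ bad g →
      volume (g '' {x | distSq u Q x = s}) < ENNReal.ofReal ε := by
    intro g hg
    refine lt_of_le_of_lt (measure_mono ?_) (not_le.1 hg)
    rintro _ ⟨x, hx, rfl⟩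
    have hx' : distSq u Q x = s := hx
    exact ⟨x, ⟨hx' ▸ hs.1, hx' ▸ hs.2⟩, by simp [hx']⟩
  refine ⟨s, le_trans (pow_le_pow_left₀ (by positivity) hrn 2) hs.1, ?_, himg _ h1, himg _ h2⟩
  nlinarith [hs.2]

end level

/-! ### Maximum principle for directional derivatives -/

section maxprinciple

variable {u : ℝ × ℝ → ℝ} {Q : ℝ × ℝ} {H R : ℝ}

/-- A directional derivative `e · ∇u` satisfies the maximum principle. Testing the linearised
equation `div (∂ₑ Y) = 0` with `((e · ∇u - K')⁺)²` avoids third derivatives of `u`, because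
`integral_jacobian_eq_zero` only involves first derivatives of `Y`. -/
lemma grad_max_principle (hu : ContDiff ℝ 2 u) (huc : HasCompactSupport u) {D : Set (ℝ × ℝ)}
    (hDo : IsOpen D) (hDb : D ⊆ Metric.ball Q R)
    (heq : ∀ x ∈ D, pdx (Y₁ u) x + pdy (Y₂ u) x = 2 * H) (e₁ e₂ K : ℝ)
    (hfr : ∀ x ∈ frontier D, e₁ * pdx u x + e₂ * pdy u x ≤ K) :
    ∀ x ∈ D, e₁ * pdx u x + e₂ * pdy u x ≤ K := by
  classical
  let f : ℝ × ℝ → ℝ := fun x => e₁ * pdx u x + e₂ * pdy u x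
  have hp := contDiff_pdx hu
  have hq := contDiff_pdy hu
  have hf : ContDiff ℝ 1 f := by fun_prop
  suffices hK : ∀ K' > K, ∀ x ∈ D, f x ≤ K' from fun x hx => le_of_forall_gt_imp_ge_of_dense
    fun K' hK' => hK K' hK' x hx
  intro K' hK'
  let h : ℝ × ℝ → ℝ := fun x => (max (f x - K') 0) ^ 2
  have hh : ContDiff ℝ 1 h := contDiff_posPart_sq.comp (hf.sub contDiff_const)
  let G : ℝ × ℝ → ℝ := D.indicator h
  have hGD : ∀ x ∈ D, G =ᶠ[nhds x] h := fun x hx => by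
    filter_upwards [hDo.mem_nhds hx] with y hy
    exact indicator_of_mem hy h
  have hGc : ∀ x ∉ D, G =ᶠ[nhds x] fun _ => 0 := fun x hx => by
    by_cases hc : x ∈ closure D
    · have hxf : x ∈ frontier D := by rw [hDo.frontier_eq]; exact ⟨hc, hx⟩
      have hlt : f x < K' := (hfr x hxf).trans_lt hK'
      filter_upwards [(isOpen_lt hf.continuous continuous_const).mem_nhds hlt] with y hy
      have hy' : f y < K' := hy
      by_cases hyD : y ∈ D
      · rw [show G y = h y from indicator_of_mem hyD h]
        simp only [h]
        rw [max_eq_right (by linarith)]; simp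
      · exact indicator_of_notMem hyD h
    · filter_upwards [isClosed_closure.isOpen_compl.mem_nhds hc] with y hy
      exact indicator_of_notMem (fun hyD => hy (subset_closure hyD)) h
  have hG : ContDiff ℝ 1 G := contDiff_iff_contDiffAt.2 fun x => by
    by_cases hx : x ∈ D
    · exact hh.contDiffAt.congr_of_eventuallyEq (hGD x hx)
    · exact contDiffAt_const.congr_of_eventuallyEq (hGc x hx)
  have hGcs : HasCompactSupport G :=
    HasCompactSupport.intro (isCompact_closedBall Q R) fun x hx =>
      indicator_of_notMem (fun hD => hx (Metric.ball_subset_closedBall (hDb hD))) h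
  have hd : ∀ x, HasDerivAt (fun t => (max (t - K') 0) ^ 2) (2 * max (f x - K') 0) (f x) := by
    intro x
    have := (hasDerivAt_posPart_sq (f x - K')).comp (f x) ((hasDerivAt_id (f x)).sub_const K')
    exact this.congr_deriv (by ring)
  have hGx : ∀ x ∈ D, pdx G x = 2 * max (f x - K') 0 * pdx f x ∧
      pdy G x = 2 * max (f x - K') 0 * pdy f x := by
    intro x hx
    rw [pdx, pdy, (hGD x hx).fderiv_eq]
    exact ⟨pdx_comp hf x (hd x), pdy_comp hf x (hd x)⟩
  have hG0 : ∀ x ∉ D, pdx G x = 0 ∧ pdy G x = 0 := by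
    intro x hx
    rw [pdx, pdy, (hGc x hx).fderiv_eq]
    simp
  have h1 := contDiff_Y₁ hu
  have h2 := contDiff_Y₂ hu
  let I : ℝ × ℝ → ℝ := fun x => (e₁ * pdx (Y₁ u) x + e₂ * pdy (Y₁ u) x) * pdx G x
    + (e₁ * pdx (Y₂ u) x + e₂ * pdy (Y₂ u) x) * pdy G x
  have c1 := continuous_pdx h1
  have c2 := continuous_pdy h1
  have c3 := continuous_pdx h2
  have c4 := continuous_pdy h2
  have c5 := continuous_pdx hG
  have c6 := continuous_pdy hG
  have s5 := hasCompactSupport_pdx hGcs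
  have s6 := hasCompactSupport_pdy hGcs
  have hIc : Continuous I := by fun_prop
  have hIs : HasCompactSupport I := s5.mul_left.add s6.mul_left
  have hI0 : ∫ x, I x = 0 := by
    have eI : I = fun x => (2 * H * e₁ * pdx G x + 2 * H * e₂ * pdy G x)
        + (e₁ * (pdx (Y₂ u) x * pdy G x - pdy (Y₂ u) x * pdx G x)
          - e₂ * (pdx (Y₁ u) x * pdy G x - pdy (Y₁ u) x * pdx G x)) := by
      funext x
      simp only [I]
      by_cases hx : x ∈ D
      · linear_combination (e₁ * pdx G x + e₂ * pdy G x) * heq x hx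
      · rw [(hG0 x hx).1, (hG0 x hx).2]; ring
    have j5 : Integrable (pdx G) := c5.integrable_of_hasCompactSupport s5
    have j6 : Integrable (pdy G) := c6.integrable_of_hasCompactSupport s6
    have j1 : Integrable fun x => pdx (Y₂ u) x * pdy G x - pdy (Y₂ u) x * pdx G x :=
      Continuous.integrable_of_hasCompactSupport (by fun_prop) (s6.mul_left.sub s5.mul_left)
    have j2 : Integrable fun x => pdx (Y₁ u) x * pdy G x - pdy (Y₁ u) x * pdx G x :=
      Continuous.integrable_of_hasCompactSupport (by fun_prop) (s6.mul_left.sub s5.mul_left)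
    have jA : Integrable fun x => 2 * H * e₁ * pdx G x + 2 * H * e₂ * pdy G x :=
      (j5.const_mul _).add (j6.const_mul _)
    have jB : Integrable fun x => e₁ * (pdx (Y₂ u) x * pdy G x - pdy (Y₂ u) x * pdx G x)
          - e₂ * (pdx (Y₁ u) x * pdy G x - pdy (Y₁ u) x * pdx G x) :=
      (j1.const_mul _).sub (j2.const_mul _)
    rw [eI, integral_add jA jB, integral_add (j5.const_mul _) (j6.const_mul _),
      integral_sub (j1.const_mul _) (j2.const_mul _), integral_const_mul, integral_const_mul,
      integral_const_mul, integral_const_mul, integral_pdx_eq_zero hG hGcs,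
      integral_pdy_eq_zero hG hGcs,
      integral_jacobian_eq_zero h2 (hasCompactSupport_Y₂ huc) hG hGcs,
      integral_jacobian_eq_zero h1 (hasCompactSupport_Y₁ huc) hG hGcs]
    ring
  have hfd : ∀ x, pdx f x = Wgraph u x * ((1 + pdx u x ^ 2) *
        (e₁ * pdx (Y₁ u) x + e₂ * pdy (Y₁ u) x)
        + pdx u x * pdy u x * (e₁ * pdx (Y₂ u) x + e₂ * pdy (Y₂ u) x)) ∧
      pdy f x = Wgraph u x * (pdx u x * pdy u x *
        (e₁ * pdx (Y₁ u) x + e₂ * pdy (Y₁ u) x)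
        + (1 + pdy u x ^ 2) * (e₁ * pdx (Y₂ u) x + e₂ * pdy (Y₂ u) x)) := by
    intro x
    have a := ((hp.differentiable one_ne_zero) x).hasFDerivAt.const_mul e₁
    have b := ((hq.differentiable one_ne_zero) x).hasFDerivAt.const_mul e₂
    have hab : HasFDerivAt f _ x := a.add b
    have k1 : pdx f x = e₁ * pdx (pdx u) x + e₂ * pdx (pdy u) x := by
      rw [pdx, hab.fderiv]; simp [pdx]
    have k2 : pdy f x = e₁ * pdy (pdx u) x + e₂ * pdy (pdy u) x := by
      rw [pdy, hab.fderiv]; simp [pdy]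
    obtain ⟨g1, g2, g3, g4⟩ := hess_eq hu x
    constructor
    · rw [k1, pdx_pdy_comm hu, g1, g2]; ring
    · rw [k2, g3, g4]; ring
  have hIeq : ∀ x ∈ D, I x = 2 * max (f x - K') 0 * (Wgraph u x *
      ((e₁ * pdx (Y₁ u) x + e₂ * pdy (Y₁ u) x) ^ 2 + (e₁ * pdx (Y₂ u) x + e₂ * pdy (Y₂ u) x) ^ 2
      + (pdx u x * (e₁ * pdx (Y₁ u) x + e₂ * pdy (Y₁ u) x)
        + pdy u x * (e₁ * pdx (Y₂ u) x + e₂ * pdy (Y₂ u) x)) ^ 2)) := by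
    intro x hx
    simp only [I]
    rw [(hGx x hx).1, (hGx x hx).2, (hfd x).1, (hfd x).2]
    ring
  have hInn : ∀ x, 0 ≤ I x := by
    intro x
    by_cases hx : x ∈ D
    · rw [hIeq x hx]
      have := Wgraph_pos u x
      have : 0 ≤ max (f x - K') 0 := le_max_right _ _
      positivity
    · simp only [I]; rw [(hG0 x hx).1, (hG0 x hx).2]; simp
  have hIz : ∀ x, I x = 0 := by
    have := (integral_eq_zero_iff_of_nonneg hInn (hIc.integrable_of_hasCompactSupport hIs)).1 hI0
    have := (hIc.ae_eq_iff_eq volume continuous_const).1 this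
    exact fun x => congrFun this x
  have hGz : ∀ x, pdx G x = 0 ∧ pdy G x = 0 := by
    intro x
    by_cases hx : x ∈ D
    · have h0 := hIz x
      rw [hIeq x hx] at h0
      rw [(hGx x hx).1, (hGx x hx).2, (hfd x).1, (hfd x).2]
      rcases mul_eq_zero.1 h0 with h0 | h0
      · rw [h0]; simp
      · rcases mul_eq_zero.1 h0 with h0 | h0
        · exact absurd h0 (Wgraph_pos u x).ne'
        · set b₁ := e₁ * pdx (Y₁ u) x + e₂ * pdy (Y₁ u) x
          set b₂ := e₁ * pdx (Y₂ u) x + e₂ * pdy (Y₂ u) x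
          have z1 : b₁ = 0 := by
            nlinarith [sq_nonneg b₁, sq_nonneg b₂, sq_nonneg (pdx u x * b₁ + pdy u x * b₂)]
          have z2 : b₂ = 0 := by
            nlinarith [sq_nonneg b₁, sq_nonneg b₂, sq_nonneg (pdx u x * b₁ + pdy u x * b₂)]
          rw [z1, z2]; simp
    · exact hG0 x hx
  have hGconst : ∀ x y, G x = G y := by
    refine is_const_of_fderiv_eq_zero (𝕜 := ℝ) (hG.differentiable one_ne_zero) fun x => ?_
    ext
    · simpa [pdx] using (hGz x).1
    · simpa [pdy] using (hGz x).2
  intro x hx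
  have hz : G (Q + (|R|, 0)) = 0 := by
    refine indicator_of_notMem (fun hD => ?_) h
    have := hDb hD
    rw [Metric.mem_ball, dist_eq_norm, add_sub_cancel_left, Prod.norm_def] at this
    simp at this
    linarith [this, le_abs_self R]
  have hGx0 : h x = 0 := by
    rw [← show G x = h x from indicator_of_mem hx h, hGconst x, hz]
  have : max (f x - K') 0 = 0 := by simpa [h] using hGx0
  have := max_eq_right_iff.1 this
  linarith

end maxprinciple

/-! ### The local gradient estimate -/

section estimate

variable {u : ℝ × ℝ → ℝ} {Q : ℝ × ℝ} {H R : ℝ}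

lemma le_of_sq_le {a b : ℝ} (h : a ^ 2 ≤ b ^ 2) (hb : 0 ≤ b) : a ≤ b :=
  (le_abs_self a).trans (abs_le_of_sq_le_sq h hb)

lemma abs_sub_lt_of_volume_image {g : ℝ × ℝ → ℝ} (hg : Continuous g) {S T : Set (ℝ × ℝ)}
    (hS : IsPreconnected S) (hST : S ⊆ T) {ε : ℝ}
    (hv : volume (g '' T) < ENNReal.ofReal ε) {x y : ℝ × ℝ} (hx : x ∈ S) (hy : y ∈ S) :
    |g x - g y| < ε := by
  have key : ∀ a ∈ S, ∀ b ∈ S, g b - g a < ε := by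
    intro a ha b hb
    have h1 := (hS.image g hg.continuousOn).Icc_subset (mem_image_of_mem g ha)
      (mem_image_of_mem g hb)
    have h2 := lt_of_le_of_lt (measure_mono (h1.trans (image_mono hST))) hv
    rw [Real.volume_Icc] at h2
    exact (ENNReal.ofReal_lt_ofReal_iff'.1 h2).1
  rw [abs_lt]
  exact ⟨by linarith [key x hx y hy], key y hy x hx⟩

lemma Y_mul_Wgraph (u : ℝ × ℝ → ℝ) (x : ℝ × ℝ) :
    Y₁ u x * Wgraph u x = pdx u x ∧ Y₂ u x * Wgraph u x = pdy u x :=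
  ⟨div_mul_cancel₀ _ (Wgraph_pos u x).ne', div_mul_cancel₀ _ (Wgraph_pos u x).ne'⟩

lemma abs_pd_le_Wgraph (u : ℝ × ℝ → ℝ) (x : ℝ × ℝ) :
    |pdx u x| ≤ Wgraph u x ∧ |pdy u x| ≤ Wgraph u x := by
  have h := Wgraph_sq u x
  have hW := (Wgraph_pos u x).le
  exact ⟨abs_le_of_sq_le_sq (by nlinarith [sq_nonneg (pdy u x)]) hW,
    abs_le_of_sq_le_sq (by nlinarith [sq_nonneg (pdx u x)]) hW⟩

lemma frontier_nonempty_of_subset_ball {D : Set (ℝ × ℝ)} (hQ : Q ∈ D)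
    (hDb : D ⊆ Metric.ball Q R) : (frontier D).Nonempty := by
  rw [nonempty_iff_ne_empty]
  intro h
  rcases isClopen_iff.1 (isClopen_iff_frontier_eq_empty.2 h) with h | h
  · rw [h] at hQ; exact hQ
  · have : Q + (|R|, 0) ∈ D := h ▸ mem_univ _
    have := hDb this
    rw [Metric.mem_ball, dist_eq_norm, add_sub_cancel_left, Prod.norm_def] at this
    simp at this
    linarith [this, le_abs_self R]

lemma sq_le_sq_add_of_abs_sub_lt {a b θ : ℝ} (hθ : 0 < θ) (ha : |a| ≤ 1) (hb : |b| ≤ 1)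
    (hab : |a - b| < θ / 8) : a ^ 2 ≤ b ^ 2 + θ / 4 := by
  have h : |(a - b) * (a + b)| ≤ θ / 8 * 2 := by
    rw [abs_mul]
    exact mul_le_mul hab.le ((abs_add_le a b).trans (by linarith)) (abs_nonneg _)
      (by positivity)
  have h2 := (abs_le.1 h).2
  have e : (a - b) * (a + b) = a ^ 2 - b ^ 2 := by ring
  linarith

/-- If the normal is almost constant and almost horizontal along the boundary of a domain around
`Q`, then the derivative of `u` in one fixed direction is large along the boundary. By the maximum
principle the graph is steep at `Q`. -/
lemma not_steep_on_frontier (hu : ContDiff ℝ 2 u) (huc : HasCompactSupport u)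
    {D : Set (ℝ × ℝ)} (hDo : IsOpen D) (hQ : Q ∈ D) (hDb : D ⊆ Metric.ball Q R)
    (heq : ∀ x ∈ D, pdx (Y₁ u) x + pdy (Y₂ u) x = 2 * H) {M θ : ℝ} (hM : 1 ≤ M)
    (hMQ : Wgraph u Q ≤ M) (hθp : 0 < θ) (hθM : θ * M ^ 2 = 1 / 16) (hθ1 : θ ≤ 1 / 16)
    (ho₁ : ∀ x ∈ frontier D, ∀ y ∈ frontier D, |Y₁ u x - Y₁ u y| < θ / 8)
    (ho₂ : ∀ x ∈ frontier D, ∀ y ∈ frontier D, |Y₂ u x - Y₂ u y| < θ / 8)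
    (hcase : ∀ z ∈ frontier D, 1 - θ < Y₁ u z ^ 2 + Y₂ u z ^ 2) : False := by
  obtain ⟨z₀, hz₀⟩ := frontier_nonempty_of_subset_ball hQ hDb
  have h0 := hcase z₀ hz₀
  obtain ⟨b1, b2⟩ := abs_Y_le u z₀
  have hsq0 := Y_sq u z₀
  have hW0 := pow_pos (Wgraph_pos u z₀) 2
  have hle1 : Y₁ u z₀ ^ 2 + Y₂ u z₀ ^ 2 ≤ 1 := by
    by_contra hn
    nlinarith
  set a := Y₁ u z₀
  set b := Y₂ u z₀
  have hmp := grad_max_principle hu huc hDo hDb heq (-a) (-b) (-(2 * M)) (fun z hz => by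
    have hz1 := hcase z hz
    have hsq := Y_sq u z
    have hWp := Wgraph_pos u z
    obtain ⟨y1, y2⟩ := Y_mul_Wgraph u z
    have hWM : 4 * M ≤ Wgraph u z := by
      refine le_of_sq_le ?_ hWp.le
      have h1 : 1 ≤ Wgraph u z ^ 2 * θ := by
        rw [← hsq]
        exact mul_le_mul_of_nonneg_left (by linarith) (by positivity)
      have h3 : (16 * M ^ 2) * θ ≤ Wgraph u z ^ 2 * θ := by linarith
      have h4 := le_of_mul_le_mul_right h3 hθp
      linarith
    have d1 := abs_lt.1 (ho₁ z hz z₀ hz₀)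
    have d2 := abs_lt.1 (ho₂ z hz z₀ hz₀)
    have m1 : |(Y₁ u z - a) * a| ≤ θ / 8 := by
      rw [abs_mul]
      nlinarith [(ho₁ z hz z₀ hz₀), abs_nonneg a, abs_nonneg (Y₁ u z - a)]
    have m2 : |(Y₂ u z - b) * b| ≤ θ / 8 := by
      rw [abs_mul]
      nlinarith [(ho₂ z hz z₀ hz₀), abs_nonneg b, abs_nonneg (Y₂ u z - b)]
    have hdot : 1 / 2 ≤ Y₁ u z * a + Y₂ u z * b := by
      have := abs_le.1 m1
      have := abs_le.1 m2
      nlinarith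
    rw [← y1, ← y2]
    nlinarith) Q hQ
  have hsqQ := Wgraph_sq u Q
  have hcs : (a * pdx u Q + b * pdy u Q) ^ 2 ≤ M ^ 2 := by
    have h1 : (a * pdx u Q + b * pdy u Q) ^ 2
        ≤ (a ^ 2 + b ^ 2) * (pdx u Q ^ 2 + pdy u Q ^ 2) := by
      nlinarith [sq_nonneg (a * pdy u Q - b * pdx u Q)]
    have h2 : Wgraph u Q ^ 2 ≤ M ^ 2 := pow_le_pow_left₀ (Wgraph_pos u Q).le hMQ 2
    nlinarith [sq_nonneg (pdx u Q), sq_nonneg (pdy u Q), sq_nonneg a, sq_nonneg b]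
  nlinarith

/-- If the normal is almost constant along the boundary of a domain and not almost horizontal at
one boundary point, then the gradient is bounded along the boundary, hence inside by the maximum
principle. -/
lemma gradient_bound_of_not_steep (hu : ContDiff ℝ 2 u) (huc : HasCompactSupport u)
    {D : Set (ℝ × ℝ)} (hDo : IsOpen D) (hDb : D ⊆ Metric.ball Q R)
    (heq : ∀ x ∈ D, pdx (Y₁ u) x + pdy (Y₂ u) x = 2 * H) {M θ : ℝ} (hM : 1 ≤ M)
    (hθp : 0 < θ) (hθM : θ * M ^ 2 = 1 / 16)
    (ho₁ : ∀ x ∈ frontier D, ∀ y ∈ frontier D, |Y₁ u x - Y₁ u y| < θ / 8)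
    (ho₂ : ∀ x ∈ frontier D, ∀ y ∈ frontier D, |Y₂ u x - Y₂ u y| < θ / 8)
    {z₀ : ℝ × ℝ} (hz₀ : z₀ ∈ frontier D) (h0 : Y₁ u z₀ ^ 2 + Y₂ u z₀ ^ 2 ≤ 1 - θ) :
    ∀ x ∈ D, Wgraph u x ≤ 10 * M := by
  have hfr : ∀ z ∈ frontier D, Wgraph u z ≤ 6 * M := by
    intro z hz
    have k1 := sq_le_sq_add_of_abs_sub_lt hθp (abs_Y_le u z).1 (abs_Y_le u z₀).1 (ho₁ z hz z₀ hz₀)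
    have k2 := sq_le_sq_add_of_abs_sub_lt hθp (abs_Y_le u z).2 (abs_Y_le u z₀).2 (ho₂ z hz z₀ hz₀)
    have hsq := Y_sq u z
    have hW := pow_pos (Wgraph_pos u z) 2
    refine le_of_sq_le ?_ (by positivity)
    have : Wgraph u z ^ 2 * (θ / 2) ≤ 1 := by
      rw [← hsq]
      exact mul_le_mul_of_nonneg_left (by linarith) hW.le
    have h3 : Wgraph u z ^ 2 * (θ / 2) ≤ (32 * M ^ 2) * (θ / 2) := by linarith
    have h4 := le_of_mul_le_mul_right h3 (by positivity)
    nlinarith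
  have hmax : ∀ e₁ e₂ : ℝ, (∀ z ∈ frontier D, e₁ * pdx u z + e₂ * pdy u z ≤ 6 * M) →
      ∀ x ∈ D, e₁ * pdx u x + e₂ * pdy u x ≤ 6 * M := fun e₁ e₂ h =>
    grad_max_principle hu huc hDo hDb heq e₁ e₂ (6 * M) h
  intro x hx
  have q1 := hmax 1 0 (fun z hz => by
    have := (abs_le.1 ((abs_pd_le_Wgraph u z).1.trans (hfr z hz))).2; linarith) x hx
  have q2 := hmax (-1) 0 (fun z hz => by
    have := (abs_le.1 ((abs_pd_le_Wgraph u z).1.trans (hfr z hz))).1; linarith) x hx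
  have q3 := hmax 0 1 (fun z hz => by
    have := (abs_le.1 ((abs_pd_le_Wgraph u z).2.trans (hfr z hz))).2; linarith) x hx
  have q4 := hmax 0 (-1) (fun z hz => by
    have := (abs_le.1 ((abs_pd_le_Wgraph u z).2.trans (hfr z hz))).1; linarith) x hx
  have r1 : pdx u x ^ 2 ≤ (6 * M) ^ 2 := sq_le_sq' (by linarith) (by linarith)
  have r2 : pdy u x ^ 2 ≤ (6 * M) ^ 2 := sq_le_sq' (by linarith) (by linarith)
  have hsq := Wgraph_sq u x
  refine le_of_sq_le ?_ (by positivity)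
  nlinarith

/-- If the normal is almost constant along the boundary of a domain around `Q`, then either the
graph is steep along the whole boundary, which by the maximum principle makes it steep at `Q`, or
the gradient is bounded on the whole boundary, hence inside. -/
lemma gradient_bound_of_small_oscillation (hu : ContDiff ℝ 2 u) (huc : HasCompactSupport u)
    {D : Set (ℝ × ℝ)} (hDo : IsOpen D) (hQ : Q ∈ D) (hDb : D ⊆ Metric.ball Q R)
    (heq : ∀ x ∈ D, pdx (Y₁ u) x + pdy (Y₂ u) x = 2 * H) {M : ℝ} (hM : 1 ≤ M)
    (hMQ : Wgraph u Q ≤ M)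
    (ho₁ : ∀ x ∈ frontier D, ∀ y ∈ frontier D, |Y₁ u x - Y₁ u y| < 1 / (128 * M ^ 2))
    (ho₂ : ∀ x ∈ frontier D, ∀ y ∈ frontier D, |Y₂ u x - Y₂ u y| < 1 / (128 * M ^ 2)) :
    ∀ x ∈ D, Wgraph u x ≤ 10 * M := by
  have hM2 : 1 ≤ M ^ 2 := one_le_pow₀ hM
  set θ : ℝ := 1 / (16 * M ^ 2) with hθ
  have hθp : 0 < θ := by positivity
  have hθM : θ * M ^ 2 = 1 / 16 := by rw [hθ]; field_simp
  have hθ1 : θ ≤ 1 / 16 := by nlinarith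
  have hε : 1 / (128 * M ^ 2) = θ / 8 := by rw [hθ]; field_simp; norm_num
  rw [hε] at ho₁ ho₂
  by_cases hcase : ∀ z ∈ frontier D, 1 - θ < Y₁ u z ^ 2 + Y₂ u z ^ 2
  · exact (not_steep_on_frontier hu huc hDo hQ hDb heq hM hMQ hθp hθM hθ1 ho₁ ho₂ hcase).elim
  · push Not at hcase
    obtain ⟨z₀, hz₀, h0⟩ := hcase
    exact gradient_bound_of_not_steep hu huc hDo hDb heq hM hθp hθM ho₁ ho₂ hz₀ h0

/-- A gradient bound inside a domain whose boundary is at distance `√s` from the base point on the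
graph keeps that boundary away from `Q` in the plane. -/
lemma ball_subset_of_gradient_bound (hu : ContDiff ℝ 2 u) {D : Set (ℝ × ℝ)} (hDo : IsOpen D)
    (hQ : Q ∈ D) {C r s : ℝ} (hC : 1 ≤ C) (hg : ∀ x ∈ D, Wgraph u x ≤ C)
    (hfr : ∀ z ∈ frontier D, s ≤ distSq u Q z) (hrs : 6 * C ^ 2 * r ^ 2 < s) :
    Metric.ball Q r ⊆ D := by
  intro x hx
  by_contra hxD
  let g : ℝ → ℝ × ℝ := fun t => Q + t • (x - Q)
  have hgc : Continuous g := by fun_prop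
  have hT : IsCompact {t | t ∈ Icc (0 : ℝ) 1 ∧ g t ∉ D} :=
    isCompact_Icc.inter_right (hDo.isClosed_compl.preimage hgc)
  obtain ⟨t, ⟨⟨ht0, ht1⟩, htD⟩, htmin⟩ := hT.exists_isLeast
    ⟨1, ⟨zero_le_one, le_rfl⟩, by simpa [g] using hxD⟩
  have htlt : ∀ a, 0 ≤ a → a < t → g a ∈ D := by
    intro a ha hat
    by_contra hn
    exact absurd (htmin ⟨⟨ha, by linarith⟩, hn⟩) (not_le.2 hat)
  have htpos : 0 < t := by
    rcases ht0.eq_or_lt with h | h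
    · exact absurd (by simpa [g, ← h] using hQ) htD
    · exact h
  have hzf : g t ∈ frontier D := by
    rw [hDo.frontier_eq]
    refine ⟨?_, htD⟩
    have h1 : t ∈ closure (Ico 0 t) := by
      rw [closure_Ico htpos.ne]; exact ⟨htpos.le, le_rfl⟩
    have h2 := map_mem_closure hgc h1 (t := D) fun a ha => htlt a ha.1 ha.2
    exact h2
  have hxr : |x.1 - Q.1| < r ∧ |x.2 - Q.2| < r := by
    rwa [Metric.mem_ball, Prod.dist_eq, max_lt_iff, Real.dist_eq, Real.dist_eq] at hx
  have hr : 0 < r := (abs_nonneg _).trans_lt hxr.1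
  have hder : ∀ a ∈ Icc (0 : ℝ) 1, HasDerivWithinAt (fun a => u (g (a * t)))
      (t * (pdx u (g (a * t)) * (x.1 - Q.1) + pdy u (g (a * t)) * (x.2 - Q.2))) (Icc 0 1) a := by
    intro a _
    have h1 : HasDerivAt (fun a : ℝ => g (a * t)) (t • (x - Q)) a := by
      have := (((hasDerivAt_id a).mul_const t).smul_const (x - Q)).const_add Q
      simpa [g] using this
    have h2 := ((hu.differentiable two_ne_zero) (g (a * t))).hasFDerivAt
    refine ((h2.comp_hasDerivAt a h1).congr_deriv ?_).hasDerivWithinAt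
    have e : x - Q = (x.1 - Q.1) • ((1 : ℝ), (0 : ℝ)) + (x.2 - Q.2) • ((0 : ℝ), (1 : ℝ)) := by
      ext <;> simp
    rw [map_smul, e, map_add, map_smul, map_smul]
    simp only [pdx, pdy, smul_eq_mul]
    ring
  have hmv := norm_image_sub_le_of_norm_deriv_le_segment_01' hder (C := 2 * C * r) (by
    intro a ha
    have hD : g (a * t) ∈ D := htlt _ (mul_nonneg ha.1 ht0) (by nlinarith [ha.2])
    obtain ⟨p1, p2⟩ := abs_pd_le_Wgraph u (g (a * t))
    have hW := hg _ hD
    rw [Real.norm_eq_abs, abs_mul, abs_of_pos htpos]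
    have k1 : |pdx u (g (a * t)) * (x.1 - Q.1)| ≤ C * r := by
      rw [abs_mul]; exact mul_le_mul (p1.trans hW) hxr.1.le (abs_nonneg _) (by linarith)
    have k2 : |pdy u (g (a * t)) * (x.2 - Q.2)| ≤ C * r := by
      rw [abs_mul]; exact mul_le_mul (p2.trans hW) hxr.2.le (abs_nonneg _) (by linarith)
    have k3 := (abs_add_le _ _).trans (add_le_add k1 k2)
    nlinarith [abs_nonneg (pdx u (g (a * t)) * (x.1 - Q.1) + pdy u (g (a * t)) * (x.2 - Q.2))])
  have g0 : g (0 * t) = Q := by simp [g]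
  rw [one_mul, g0, Real.norm_eq_abs] at hmv
  have hs := hfr _ hzf
  have n1 : (u (g t) - u Q) ^ 2 ≤ (2 * C * r) ^ 2 := by
    rw [← sq_abs]; exact pow_le_pow_left₀ (abs_nonneg _) hmv 2
  have hcoord : ∀ d : ℝ, |d| < r → (t * d) ^ 2 ≤ r ^ 2 := by
    intro d hd
    rw [← sq_abs, abs_mul, abs_of_pos htpos]
    exact pow_le_pow_left₀ (by positivity) (by nlinarith [abs_nonneg d]) 2
  have n2 := hcoord _ hxr.1
  have n3 := hcoord _ hxr.2
  have e1 : (g t).1 - Q.1 = t * (x.1 - Q.1) := by simp [g]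
  have e2 : (g t).2 - Q.2 = t * (x.2 - Q.2) := by simp [g]
  rw [distSq, e1, e2] at hs
  have : r ^ 2 ≤ C ^ 2 * r ^ 2 := le_mul_of_one_le_left (by positivity) (one_le_pow₀ hC)
  nlinarith

/-- Interior gradient estimate: a bound for `W` at one point gives a bound on a ball whose radius does
not depend on the solution. Compact support is harmless, since the equation is only required near
`Q`. -/
theorem local_gradient_estimate (hH : 0 < H) (hR : 0 < R) (hHR : H * R ≤ 1) (M : ℝ) :
    ∃ r > 0, ∃ C, ∀ (u : ℝ × ℝ → ℝ) (Q : ℝ × ℝ), ContDiff ℝ 2 u → HasCompactSupport u →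
      (∀ x ∈ Metric.ball Q (5 * R), pdx (Y₁ u) x + pdy (Y₂ u) x = 2 * H) →
      Wgraph u Q ≤ M → ∀ x ∈ Metric.ball Q r, Wgraph u x ≤ C := by
  set M₁ : ℝ := max M 1
  have hM : 1 ≤ M₁ := le_max_right _ _
  obtain ⟨n, hn⟩ := exists_good_level (ε := 1 / (128 * M₁ ^ 2)) (by positivity)
  refine ⟨R / 2 ^ n / (30 * M₁), by positivity, 10 * M₁, fun u Q hu huc heq hQM => ?_⟩
  obtain ⟨s, hs1, hs2, hv1, hv2⟩ := hn u Q H R hu huc hH hR hHR heq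
  have hs0 : 0 < s := lt_of_lt_of_le (by positivity) hs1
  have hO := isOpen_distSq_lt hu Q s
  have hQO : Q ∈ {x | distSq u Q x < s} := by simpa [distSq] using hs0
  have hOb : {x | distSq u Q x < s} ⊆ Metric.ball Q R := fun x hx =>
    norm_lt_of_distSq_lt hR (lt_trans hx hs2)
  obtain ⟨D, hDo, hQD, hDb, hDpre, hDfr⟩ := exists_filled_component hO hQO hOb
  have hfs : frontier D ⊆ {x | distSq u Q x = s} := fun z hz => by
    obtain ⟨h1, h2⟩ := hDfr hz
    exact le_antisymm (closure_lt_subset_le (contDiff_distSq hu Q).continuous continuous_const h1)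
      (not_lt.1 h2)
  have hW := gradient_bound_of_small_oscillation hu huc hDo hQD hDb
    (fun x hx => heq x (Metric.ball_subset_ball (by linarith) (hDb hx))) hM
    (hQM.trans (le_max_left _ _))
    (fun x hx y hy => abs_sub_lt_of_volume_image (contDiff_Y₁ hu).continuous hDpre hfs hv1 hx hy)
    (fun x hx y hy => abs_sub_lt_of_volume_image (contDiff_Y₂ hu).continuous hDpre hfs hv2 hx hy)
  have hsub := ball_subset_of_gradient_bound (r := R / 2 ^ n / (30 * M₁)) hu hDo hQD
    (by linarith) hW (fun z hz => (hfs hz).ge) (lt_of_lt_of_le ?_ hs1)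
  · exact fun x hx => hW x (hsub hx)
  · have e : 6 * (10 * M₁) ^ 2 * (R / 2 ^ n / (30 * M₁)) ^ 2 = 2 / 3 * (R / 2 ^ n) ^ 2 := by
      field_simp; norm_num
    rw [e]
    have : 0 < (R / 2 ^ n) ^ 2 := by positivity
    linarith

end estimate

/-! ### Localisation of solutions -/

section localise

lemma eventuallyEq_pd {u v : ℝ × ℝ → ℝ} {x : ℝ × ℝ} (h : v =ᶠ[nhds x] u) :
    pdx v =ᶠ[nhds x] pdx u ∧ pdy v =ᶠ[nhds x] pdy u := by
  constructor <;> filter_upwards [h.fderiv (𝕜 := ℝ)] with y hy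
  · rw [pdx, hy, pdx]
  · rw [pdy, hy, pdy]

/-- The mean curvature equation in divergence form, stated for a function which is globally `C²`
and agrees near `x` with a solution. -/
lemma divergence_eq_of_eventuallyEq {H : ℝ} {Ω : Set (ℝ × ℝ)} {u v : ℝ × ℝ → ℝ} {x : ℝ × ℝ}
    (hu : IsCMCSolution H Ω u) (hx : x ∈ Ω) (hv : ContDiff ℝ 2 v) (h : v =ᶠ[nhds x] u) :
    pdx (Y₁ v) x + pdy (Y₂ v) x = 2 * H := by
  obtain ⟨h1, h2⟩ := eventuallyEq_pd h
  obtain ⟨h11, h12⟩ := eventuallyEq_pd h1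
  obtain ⟨-, h22⟩ := eventuallyEq_pd h2
  have e := hu.2 x hx
  obtain ⟨s1, -, -, s4⟩ := shape_eq hv x
  have hW := Wgraph_pos v x
  have hpow : (1 + pdx v x ^ 2 + pdy v x ^ 2) ^ ((3 : ℝ) / 2) = Wgraph v x ^ 3 := by
    rw [Wgraph, Real.sqrt_eq_rpow, ← Real.rpow_natCast _ 3, ← Real.rpow_mul (by positivity)]
    norm_num
  change (1 + pdy u x ^ 2) * pdx (pdx u) x - 2 * pdx u x * pdy u x * pdy (pdx u) x
    + (1 + pdx u x ^ 2) * pdy (pdy u) x = _ at e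
  rw [← h1.eq_of_nhds, ← h2.eq_of_nhds, ← h11.eq_of_nhds, ← h12.eq_of_nhds, ← h22.eq_of_nhds,
    hpow] at e
  refine mul_right_cancel₀ (pow_pos hW 3).ne' ?_
  linarith

lemma exists_cutoff_extension {Ω : Set (ℝ × ℝ)} (hΩ : IsOpen Ω) {u : ℝ × ℝ → ℝ}
    (hu : ContDiffOn ℝ 2 u Ω) {Q : ℝ × ℝ} {r r' : ℝ} (hr : 0 < r) (hrr : r < r')
    (hsub : Metric.closedBall Q r' ⊆ Ω) :
    ∃ v : ℝ × ℝ → ℝ, ContDiff ℝ 2 v ∧ HasCompactSupport v ∧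
      ∀ x ∈ Metric.ball Q r, v =ᶠ[nhds x] u := by
  let χ : ContDiffBump Q := ⟨r, r', hr, hrr⟩
  refine ⟨fun x => χ x * u x, ?_, χ.hasCompactSupport.mul_right, fun x hx => ?_⟩
  · rw [contDiff_iff_contDiffAt]
    intro x
    by_cases hx : x ∈ Ω
    · exact χ.contDiffAt.mul (hu.contDiffAt (hΩ.mem_nhds hx))
    · have hz : x ∉ tsupport χ := fun h => hx (hsub (by rwa [χ.tsupport_eq] at h))
      have h0 := notMem_tsupport_iff_eventuallyEq.1 hz
      refine (contDiffAt_const (c := (0 : ℝ))).congr_of_eventuallyEq ?_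
      filter_upwards [h0] with y hy
      rw [hy]; simp
  · filter_upwards [Metric.isOpen_ball.mem_nhds hx] with y hy
    rw [χ.one_of_mem_closedBall (Metric.ball_subset_closedBall hy), one_mul]

end localise

/-- the convergence domain `B(u_n)` of a sequence of solutions of (CMC)
is an open subset of `ℝ²`. -/
theorem stmt_3 (H : ℝ) (hH : 0 < H) (Ω : Set (ℝ × ℝ)) (hΩ : IsOpen Ω)
    (hΩconn : IsConnected Ω) (u : ℕ → ℝ × ℝ → ℝ)
    (hu : ∀ n, IsCMCSolution H Ω (u n)) :
    IsOpen {Q ∈ Ω | ∃ M : ℝ, ∀ n, Wgraph (u n) Q ≤ M} := by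
  rw [Metric.isOpen_iff]
  rintro Q ⟨hQ, M, hM⟩
  obtain ⟨ρ, hρ, hρΩ⟩ := Metric.nhds_basis_closedBall.mem_iff.1 (hΩ.mem_nhds hQ)
  set R : ℝ := min (ρ / 6) (1 / H) with hRdef
  have hR : 0 < R := by positivity
  have hRρ : 6 * R ≤ ρ := by linarith [min_le_left (ρ / 6) (1 / H)]
  have hHR : H * R ≤ 1 := by
    calc H * R ≤ H * (1 / H) := mul_le_mul_of_nonneg_left (min_le_right _ _) hH.le
      _ = 1 := by field_simp
  have hsub : Metric.closedBall Q (6 * R) ⊆ Ω :=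
    (Metric.closedBall_subset_closedBall hRρ).trans hρΩ
  have hsub5 : Metric.ball Q (5 * R) ⊆ Ω :=
    (Metric.ball_subset_closedBall.trans
      (Metric.closedBall_subset_closedBall (by linarith))).trans hsub
  obtain ⟨r, hr, C, hC⟩ := local_gradient_estimate hH hR hHR M
  refine ⟨min r (5 * R), by positivity, fun x hx => ?_⟩
  have hxr : x ∈ Metric.ball Q r := Metric.ball_subset_ball (min_le_left _ _) hx
  have hx5 : x ∈ Metric.ball Q (5 * R) := Metric.ball_subset_ball (min_le_right _ _) hx
  refine ⟨hsub5 hx5, C, fun n => ?_⟩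
  obtain ⟨v, hv, hvc, hvu⟩ := exists_cutoff_extension hΩ (hu n).1 (r := 5 * R) (r' := 6 * R)
    (by linarith) (by linarith) hsub
  have hW : ∀ y ∈ Metric.ball Q (5 * R), Wgraph v y = Wgraph (u n) y := by
    intro y hy
    obtain ⟨h1, h2⟩ := eventuallyEq_pd (hvu y hy)
    rw [Wgraph, Wgraph, h1.eq_of_nhds, h2.eq_of_nhds]
  rw [← hW x hx5]
  refine hC v Q hv hvc
    (fun y hy => divergence_eq_of_eventuallyEq (hu n) (hsub5 hy) hv (hvu y hy)) ?_ x hxr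
  rw [hW Q (Metric.mem_ball_self (by linarith))]
  exact hM n
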